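/- arXiv:1111.5867 — 2 statements merged into one kernel-verified Lean document; each statement's English description precedes it below -/
import Mathlib

section
/- Suppose the SNLM parameters δ_n, t_n satisfy assumptions A1–A4. Then for every α ≥ 1 and C > 0, inf_{δ_n, t_n} sup_{f ∈ H^α(C)} R_n(f, f̂^S) = Ω(n^{-1}); that is, there exists a constant c > 0 such that for every admissible choice of δ_n and t_n, sup_{f ∈ H^α(C)} R_n(f, f̂^S) ≥ c/n for all sufficiently large n. -/
open MeasureTheory ProbabilityTheory Real Finset Filter

noncomputable section

/-- The pixel grid: indices are taken mod `n` (periodic extension). -/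
abbrev Px (n : ℕ) := ZMod n × ZMod n

/-- The distribution of the i.i.d. `N(0, σ²)` noise array. -/
def noise (n : ℕ) [NeZero n] (σ : ℝ) : Measure (Px n → ℝ) :=
  Measure.pi fun _ => gaussianReal 0 (Real.toNNReal (σ ^ 2))

/-- The Hölder ball `Hölder^α(C)` of functions on `ℝ`. -/
def HolderBall (α C : ℝ) : Set (ℝ → ℝ) :=
  {h | ∀ t t' : ℝ,
    |iteratedDeriv ⌊α⌋₊ h t - iteratedDeriv ⌊α⌋₊ h t'| ≤ C * |t - t'| ^ (α - (⌊α⌋₊ : ℝ))}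

/-- Edge contours of the Horizon class `H^α(C)`. -/
def HorizonFns (α C : ℝ) : Set (ℝ → ℝ) := HolderBall α C ∩ HolderBall 1 1

/-- The Horizon image `f_h(t₁,t₂) = 1_{t₂ < h t₁}`. -/
def horizonImg (h : ℝ → ℝ) (t₁ t₂ : ℝ) : ℝ := if t₂ < h t₁ then 1 else 0

/-- `x_{i,j}`: average of `f` over `Pixel(i,j)`. -/
def pixelAvg (n : ℕ) [NeZero n] (f : ℝ → ℝ → ℝ) (p : Px n) : ℝ :=
  (n : ℝ) ^ 2 * ∫ t₁ in ((p.1.val : ℝ) / n)..(((p.1.val : ℝ) + 1) / n),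
      ∫ t₂ in ((p.2.val : ℝ) / n)..(((p.2.val : ℝ) + 1) / n), f t₁ t₂

/-- The pixel array of the Horizon image `f_h`. -/
def horizonPixels (n : ℕ) [NeZero n] (h : ℝ → ℝ) : Px n → ℝ :=
  pixelAvg n (horizonImg h)

/-- The risk `R_n(f, f̂) = E[(1/n²) Σ (x_{i,j} - f̂_{i,j})²]` of an estimator `est`
which maps observations `y = x + z` to an estimated pixel array. -/
def risk (n : ℕ) [NeZero n] (σ : ℝ) (x : Px n → ℝ)
    (est : (Px n → ℝ) → Px n → ℝ) : ℝ :=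
  ∫ z, (1 / (n : ℝ) ^ 2) * ∑ p : Px n, (x p - est (fun q => x q + z q) p) ^ 2 ∂(noise n σ)


/-- The square window of offsets `{-δ,…,δ}²`. -/
def offsets (δ : ℕ) : Finset (ℤ × ℤ) :=
  Finset.Icc (-(δ : ℤ)) (δ : ℤ) ×ˢ Finset.Icc (-(δ : ℤ)) (δ : ℤ)

/-- Shift a pixel by an integer offset (periodic extension). -/
def shift {n : ℕ} (p : Px n) (o : ℤ × ℤ) : Px n :=
  (p.1 + (o.1 : ZMod n), p.2 + (o.2 : ZMod n))

/-- The `δ`-neighborhood distance `d²_δ(y_p, y_q)` (center element removed),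
normalized by `ρ² = (2δ+1)² - 1`. -/
def nlmDist2 (n : ℕ) (δ : ℕ) (y : Px n → ℝ) (p q : Px n) : ℝ :=
  (1 / (((2 * δ + 1) ^ 2 - 1 : ℕ) : ℝ)) *
    ((∑ o ∈ offsets δ, |y (shift p o) - y (shift q o)| ^ 2) - |y p - y q| ^ 2)

/-- The (hard-thresholded) NLM weight: `1` if `d²_δ(y_p, y_q) ≤ 2σ² + t`, else `0`. -/
def nlmWeight (n : ℕ) (δ : ℕ) (σ t : ℝ) (y : Px n → ℝ) (p q : Px n) : ℝ :=
  if nlmDist2 n δ y p q ≤ 2 * σ ^ 2 + t then 1 else 0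

/-- The NLM estimate at pixel `p` (search over the whole image). -/
def nlmEst (n : ℕ) [NeZero n] (δ : ℕ) (σ t : ℝ) (y : Px n → ℝ) (p : Px n) : ℝ :=
  (∑ q : Px n, nlmWeight n δ σ t y p q * y q) / (∑ q : Px n, nlmWeight n δ σ t y p q)

/-- The semi-oracle `δ`-neighborhood distance `d̄²_δ(y_p, y_q)`: the reference
neighborhood uses the noise-free values `x`, the other the observations `y`. -/
def snlmDist2 (n : ℕ) (δ : ℕ) (x y : Px n → ℝ) (p q : Px n) : ℝ :=
  (1 / (((2 * δ + 1) ^ 2 - 1 : ℕ) : ℝ)) *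
    ((∑ o ∈ offsets δ, |x (shift p o) - y (shift q o)| ^ 2) - (x p - y q) ^ 2)

/-- The semi-oracle NLM weight: `1` if `d̄²_δ(y_p, y_q) ≤ σ² + t`, else `0`. -/
def snlmWeight (n : ℕ) (δ : ℕ) (σ t : ℝ) (x y : Px n → ℝ) (p q : Px n) : ℝ :=
  if snlmDist2 n δ x y p q ≤ σ ^ 2 + t then 1 else 0

/-- The semi-oracle NLM estimate at pixel `p` (search over the whole image). -/
def snlmEst (n : ℕ) [NeZero n] (δ : ℕ) (σ t : ℝ) (x y : Px n → ℝ) (p : Px n) : ℝ :=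
  (∑ q : Px n, snlmWeight n δ σ t x y p q * y q) /
    (∑ q : Px n, snlmWeight n δ σ t x y p q)

/-- The risk of the semi-oracle NLM on the image with pixel array `x`. -/
def snlmRisk (n : ℕ) [NeZero n] (σ : ℝ) (δ : ℕ) (t : ℝ) (x : Px n → ℝ) : ℝ :=
  ∫ z, (1 / (n : ℝ) ^ 2) * ∑ p : Px n,
    (x p - snlmEst n δ σ t x (fun q => x q + z q) p) ^ 2 ∂(noise n σ)

/-- Chi-square lower tail at the CLT scale, on the infinite product space. -/
lemma chi_clt (σ : ℝ) (hσ : 0 < σ) : ∃ c : ℝ, 0 < c ∧ ∃ M : ℕ, ∀ m : ℕ, M ≤ m →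
    ENNReal.ofReal c ≤ (Measure.infinitePi (fun _ : ℕ => gaussianReal 0 (Real.toNNReal (σ ^ 2))))
      {ω | ∑ k ∈ Finset.range m, (ω k) ^ 2 ≤ m * σ ^ 2 - 2 * √m} := by
  set v : NNReal := Real.toNNReal (σ ^ 2) with hv
  have hv0 : v ≠ 0 := by
    rw [hv]; simp [hσ.ne']
  have hvσ : (v : ℝ) = σ ^ 2 := by rw [hv]; exact Real.coe_toNNReal _ (by positivity)
  set P := Measure.infinitePi (fun _ : ℕ => gaussianReal 0 v) with hP
  let X : ℕ → (ℕ → ℝ) → ℝ := fun k ω => (ω k) ^ 2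
  have hlaw : ∀ k, P.map (fun ω : ℕ → ℝ => ω k) = gaussianReal 0 v := fun k =>
    (measurePreserving_eval_infinitePi (fun _ : ℕ => gaussianReal 0 v) k).map_eq
  have hev : ∀ k, AEMeasurable (fun ω : ℕ → ℝ => ω k) P := fun k =>
    (measurable_pi_apply k).aemeasurable
  have hindep : iIndepFun X P :=
    iIndepFun_infinitePi (X := fun (_ : ℕ) (x : ℝ) => x ^ 2) (fun _ => by fun_prop)
  have hident : ∀ i, IdentDistrib (X i) (X 0) P P := by
    intro i
    have h : IdentDistrib (fun ω : ℕ → ℝ => ω i) (fun ω : ℕ → ℝ => ω 0) P P :=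
      ⟨(hev i), (hev 0), by rw [hlaw, hlaw]⟩
    exact h.comp (u := fun x : ℝ => x ^ 2) (by fun_prop)
  have hX0 : MemLp (X 0) 2 P := by
    have h4 : MemLp (fun x : ℝ => x ^ 2) 2 (gaussianReal 0 v) := by
      have hi := memLp_id_gaussianReal' (μ := 0) (v := v) 4 (by simp)
      have := hi.mul (p := 4) (q := 4) (r := 2) hi (hpqr := ⟨by
        rw [← two_mul, show (4 : ENNReal) = 2 * 2 by norm_num, ENNReal.mul_inv (by simp) (by simp),
          ← mul_assoc, ENNReal.mul_inv_cancel (by simp) (by simp), one_mul]⟩)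
      convert this using 1
      ext x; simp [pow_two]
    rw [← hlaw 0] at h4
    exact (memLp_map_measure_iff (μ := P) (f := fun ω : ℕ → ℝ => ω 0)
      (g := fun x : ℝ => x ^ 2) (by fun_prop) (hev 0)).1 h4
  have hmean : P[X 0] = σ ^ 2 := by
    have : P[X 0] = ∫ x, x ^ 2 ∂(gaussianReal 0 v) := by
      rw [← hlaw 0, integral_map (hev 0) (by fun_prop)]
    rw [this, ← hvσ, ← variance_fun_id_gaussianReal (μ := 0) (v := v),
      variance_of_integral_eq_zero (by fun_prop) (by simp)]
  have hvar : Var[X 0; P] ≠ 0 := by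
    intro h0
    have h1 : ∀ᵐ ω ∂P, X 0 ω = P[X 0] := ae_eq_integral_of_variance_eq_zero hX0 h0
    rw [hmean] at h1
    have h2 : ∀ᵐ x ∂(gaussianReal 0 v), x ^ 2 = σ ^ 2 := by
      rw [← hlaw 0, ae_map_iff (hev 0) (measurableSet_eq_fun (by fun_prop) (by fun_prop))]
      exact h1
    have h3 : gaussianReal 0 v {x : ℝ | x ^ 2 = σ ^ 2} = 0 := by
      have := nullSingletonClass_gaussianReal (μ := 0) hv0
      have : {x : ℝ | x ^ 2 = σ ^ 2} ⊆ {σ, -σ} := by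
        intro x hx
        exact sq_eq_sq_iff_eq_or_eq_neg.1 hx
      exact measure_mono_null this ((Set.toFinite _).measure_zero _)
    have h4 : gaussianReal 0 v {x : ℝ | x ^ 2 = σ ^ 2}ᶜ = 0 := h2
    have := measure_add_measure_compl (μ := gaussianReal 0 v)
      (s := {x : ℝ | x ^ 2 = σ ^ 2}) (measurableSet_eq_fun (by fun_prop) (by fun_prop))
    rw [h3, h4] at this
    simp at this
  set w : NNReal := Var[X 0; P].toNNReal with hw
  have hw0 : w ≠ 0 := by
    have := (variance_nonneg (X 0) P).lt_of_ne' hvar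
    rw [hw]; simp [this]
  have hclt := tendstoInDistribution_inv_sqrt_mul_sum_sub (P := P) (X := X)
    (P' := gaussianReal 0 w) (Y := id) ⟨by fun_prop, by simp [hw]⟩ hX0 hindep hident
  have hlim := ProbabilityMeasure.le_liminf_measure_open_of_tendsto hclt.tendsto
    (isOpen_Iio (a := (-2 : ℝ)))
  simp only [ProbabilityMeasure.coe_mk, Measure.map_id] at hlim
  have hpos : 0 < gaussianReal 0 w (Set.Iio (-2)) := by
    rw [pos_iff_ne_zero]
    intro h
    have := gaussianReal_absolutelyContinuous' 0 hw0 h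
    simp at this
  obtain ⟨c, hc0, hc⟩ := ENNReal.lt_iff_exists_real_btwn.1 hpos
  obtain ⟨hcc, hc⟩ := hc
  have hevt := eventually_lt_of_lt_liminf (lt_of_lt_of_le hc hlim)
  obtain ⟨M, hM⟩ := eventually_atTop.1 hevt
  refine ⟨c, by simpa using hcc, M + 1, fun m hm => ?_⟩
  have hMm := hM m (by omega)
  refine hMm.le.trans ?_
  rw [Measure.map_apply (by fun_prop) measurableSet_Iio]
  refine measure_mono fun ω hω => ?_
  simp only [Set.mem_preimage, Set.mem_Iio, hmean] at hω
  simp only [Set.mem_ofPred_eq]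
  have hm0 : 0 < √(m : ℝ) := Real.sqrt_pos.2 (by exact_mod_cast (by omega : 0 < m))
  rw [inv_mul_lt_iff₀ hm0] at hω
  have : ∑ k ∈ Finset.range m, X k ω = ∑ k ∈ Finset.range m, ω k ^ 2 := rfl
  linarith

lemma charFun_sum_iid {Ω ι : Type*} [MeasurableSpace Ω] (P : Measure Ω) [IsProbabilityMeasure P]
    (X : ι → Ω → ℝ) (hX : iIndepFun X P) (hm : ∀ i, Measurable (X i)) (ν : Measure ℝ)
    (hν : ∀ i, P.map (X i) = ν) (T : Finset ι) :
    charFun (P.map (fun ω => ∑ i ∈ T, X i ω)) = (charFun ν) ^ T.card := by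
  rw [(hX.restrict _).charFun_map_fun_finsetSum_eq_prod (fun _ _ => (hm _).aemeasurable)]
  simp [hν]

lemma noise_chi (n : ℕ) [NeZero n] (σ : ℝ) (T : Finset (Px n)) (r : ℝ) :
    noise n σ {z | ∑ s ∈ T, (z s) ^ 2 ≤ r} =
    (Measure.infinitePi (fun _ : ℕ => gaussianReal 0 (Real.toNNReal (σ ^ 2))))
      {ω | ∑ k ∈ Finset.range T.card, (ω k) ^ 2 ≤ r} := by
  set v : NNReal := Real.toNNReal (σ ^ 2) with hv
  set P := Measure.infinitePi (fun _ : ℕ => gaussianReal 0 v) with hP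
  set ν := (gaussianReal 0 v).map (fun x : ℝ => x ^ 2) with hνdef
  have e1 : charFun ((noise n σ).map (fun z => ∑ s ∈ T, (z s) ^ 2)) = (charFun ν) ^ T.card := by
    unfold noise
    apply charFun_sum_iid (Measure.pi fun _ : Px n => gaussianReal 0 v)
      (fun s z => (z s) ^ 2)
    · exact iIndepFun_pi (X := fun (_ : Px n) (x : ℝ) => x ^ 2) (fun _ => by fun_prop)
    · intro i; fun_prop
    · intro i
      have h := (measurePreserving_eval (fun _ : Px n => gaussianReal 0 v) i).map_eq
      have h2 := congrArg (fun μ => μ.map (fun x : ℝ => x ^ 2)) h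
      rw [Measure.map_map (by fun_prop) (by fun_prop)] at h2
      exact h2
  have e2 : charFun (P.map (fun z => ∑ s ∈ Finset.range T.card, (z s) ^ 2))
      = (charFun ν) ^ T.card := by
    conv_rhs => rw [← Finset.card_range T.card]
    apply charFun_sum_iid P (fun s z => (z s) ^ 2)
    · exact iIndepFun_infinitePi (X := fun (_ : ℕ) (x : ℝ) => x ^ 2) (fun _ => by fun_prop)
    · intro i; fun_prop
    · intro i
      have h := (measurePreserving_eval_infinitePi (fun _ : ℕ => gaussianReal 0 v) i).map_eq
      have h2 := congrArg (fun μ => μ.map (fun x : ℝ => x ^ 2)) h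
      rw [Measure.map_map (by fun_prop) (by fun_prop)] at h2
      exact h2
  have : IsProbabilityMeasure (noise n σ) := by unfold noise; infer_instance
  have e3 : (noise n σ).map (fun z => ∑ s ∈ T, (z s) ^ 2)
      = P.map (fun z => ∑ s ∈ Finset.range T.card, (z s) ^ 2) := by
    have := Measure.isProbabilityMeasure_map (μ := noise n σ)
      (f := fun z => ∑ s ∈ T, (z s) ^ 2) (Measurable.aemeasurable (by fun_prop))
    have := Measure.isProbabilityMeasure_map (μ := P)
      (f := fun z => ∑ s ∈ Finset.range T.card, (z s) ^ 2) (Measurable.aemeasurable (by fun_prop))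
    exact Measure.ext_of_charFun (e1.trans e2.symm)
  have := congrArg (fun μ => μ (Set.Iic r)) e3
  rw [Measure.map_apply (by fun_prop) measurableSet_Iic,
    Measure.map_apply (by fun_prop) measurableSet_Iic] at this
  exact this

instance noise_prob (n : ℕ) [NeZero n] (σ : ℝ) : IsProbabilityMeasure (noise n σ) := by
  unfold noise; infer_instance

/-- flipping signs of some coordinates preserves the noise law -/
lemma noise_flip (n : ℕ) [NeZero n] (σ : ℝ) (S : Set (Px n)) [DecidablePred (· ∈ S)] :
    MeasurePreserving (fun (z : Px n → ℝ) s => if s ∈ S then - z s else z s)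
      (noise n σ) (noise n σ) := by
  unfold noise
  apply measurePreserving_pi (fun _ : Px n => gaussianReal 0 (Real.toNNReal (σ ^ 2)))
    (fun _ : Px n => gaussianReal 0 (Real.toNNReal (σ ^ 2)))
    (f := fun s x => if s ∈ S then - x else x)
  intro i
  by_cases h : i ∈ S
  · simp only [h, if_true]
    exact ⟨by fun_prop, by simpa using gaussianReal_map_neg (μ := 0)⟩
  · simp only [h, if_false]
    exact MeasurePreserving.id _

lemma noise_sym (n : ℕ) [NeZero n] (σ : ℝ) (E : Set (Px n → ℝ)) (hE : MeasurableSet E)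
    (hs : ∀ z ∈ E, (fun s => - z s) ∈ E) (T : Finset (Px n)) :
    noise n σ E ≤ 2 * noise n σ (E ∩ {z | 0 ≤ ∑ s ∈ T, z s}) := by
  classical
  have hf := noise_flip n σ Set.univ
  simp only [Set.mem_univ, if_true] at hf
  have hmeas : MeasurableSet (E ∩ {z | 0 ≤ ∑ s ∈ T, z s}) :=
    hE.inter (measurableSet_le (by fun_prop) (by fun_prop))
  have h1 := hf.measure_preimage hmeas.nullMeasurableSet
  rw [two_mul]
  nth_rewrite 2 [← h1]
  refine le_trans (measure_mono ?_) (measure_union_le _ _)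
  intro z hz
  rcases le_total 0 (∑ s ∈ T, z s) with h | h
  · exact Or.inl ⟨hz, h⟩
  · refine Or.inr ⟨hs z hz, ?_⟩
    simpa using h

lemma noise_integrable (n : ℕ) [NeZero n] (σ : ℝ) (q : Px n) (p : ENNReal) (hp : p ≠ ⊤) :
    MemLp (fun z : Px n → ℝ => z q) p (noise n σ) := by
  have h := (memLp_id_gaussianReal' (μ := 0) (v := Real.toNNReal (σ ^ 2)) p hp)
  exact h.comp_measurePreserving
    (measurePreserving_eval (fun _ : Px n => gaussianReal 0 (Real.toNNReal (σ ^ 2))) q)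

lemma noise_zero (n : ℕ) [NeZero n] (σ : ℝ) (q : Px n) (f : (Px n → ℝ) → ℝ) (hf : Measurable f)
    (hfq : ∀ z z' : Px n → ℝ, (∀ s, s ≠ q → z s = z' s) → f z = f z') :
    ∫ z, f z * z q ∂(noise n σ) = 0 := by
  classical
  have hfl := noise_flip n σ {q}
  have h1 : ∫ z, f z * z q ∂(noise n σ) =
      ∫ z, f z * (- z q) ∂(noise n σ) := by
    conv_lhs => rw [← hfl.map_eq]
    rw [integral_map hfl.measurable.aemeasurable (by fun_prop)]
    congr 1
    ext z
    rw [hfq (fun s => if s ∈ ({q} : Set (Px n)) then - z s else z s) z]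
    · simp
    · intro s hs; simp [hs]
  have h2 : ∫ z, f z * (- z q) ∂(noise n σ) = - ∫ z, f z * z q ∂(noise n σ) := by
    rw [← integral_neg]; congr 1; ext z; ring
  linarith

lemma abs_horizonPixels_le (n : ℕ) [NeZero n] (h : ℝ → ℝ) (p : Px n) :
    |horizonPixels n h p| ≤ 1 := by
  have hn : (0 : ℝ) < n := by exact_mod_cast Nat.pos_of_ne_zero (NeZero.ne n)
  have hlen : ∀ k : ℝ, |(k + 1) / n - k / n| = 1 / n := by
    intro k
    rw [← sub_div, add_sub_cancel_left, abs_of_pos (by positivity)]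
  unfold horizonPixels pixelAvg
  have hin : ∀ t₁ : ℝ, ‖∫ t₂ in ((p.2.val : ℝ) / n)..(((p.2.val : ℝ) + 1) / n),
      horizonImg h t₁ t₂‖ ≤ 1 / n := by
    intro t₁
    have := intervalIntegral.norm_integral_le_of_norm_le_const (C := 1)
      (a := (p.2.val : ℝ) / n) (b := ((p.2.val : ℝ) + 1) / n) (f := horizonImg h t₁) (by
        intro x _
        unfold horizonImg
        split_ifs <;> simp)
    rwa [hlen, one_mul] at this
  have hout := intervalIntegral.norm_integral_le_of_norm_le_const (C := 1 / n)
      (a := (p.1.val : ℝ) / n) (b := ((p.1.val : ℝ) + 1) / n)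
      (f := fun t₁ => ∫ t₂ in ((p.2.val : ℝ) / n)..(((p.2.val : ℝ) + 1) / n),
        horizonImg h t₁ t₂) (fun x _ => hin x)
  rw [hlen, Real.norm_eq_abs] at hout
  rw [abs_mul, abs_of_pos (by positivity : (0 : ℝ) < (n : ℝ) ^ 2)]
  calc _ ≤ (n : ℝ) ^ 2 * (1 / n * (1 / n)) := by gcongr
    _ = 1 := by field_simp

/-- The image with a single row of ones. -/
lemma horizonPixels_row (n : ℕ) [NeZero n] (p : Px n) :
    horizonPixels n (fun _ => 1 / (n : ℝ)) p = if p.2 = 0 then 1 else 0 := by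
  have hn : (0 : ℝ) < n := by exact_mod_cast Nat.pos_of_ne_zero (NeZero.ne n)
  unfold horizonPixels pixelAvg
  have hin : ∀ t₁ : ℝ, ∫ t₂ in ((p.2.val : ℝ) / n)..(((p.2.val : ℝ) + 1) / n),
      horizonImg (fun _ => 1 / (n : ℝ)) t₁ t₂ = if p.2 = 0 then 1 / (n : ℝ) else 0 := by
    intro t₁
    by_cases h : p.2 = 0
    · simp only [h, if_true, ZMod.val_zero, Nat.cast_zero, zero_add, zero_div]
      rw [intervalIntegral.integral_congr_ae (g := fun _ => (1 : ℝ))]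
      · simp
      · have : ∀ᵐ x : ℝ, x ≠ 1 / (n : ℝ) := by
          simp [ae_iff]
        filter_upwards [this] with x hx hx2
        rw [Set.uIoc_of_le (by positivity)] at hx2
        unfold horizonImg
        rw [if_pos (lt_of_le_of_ne hx2.2 hx)]
    · simp only [h, if_false]
      have hv : 1 ≤ p.2.val := by
        rcases Nat.eq_zero_or_pos p.2.val with h0 | h0
        · exact absurd ((ZMod.val_eq_zero _).1 h0) h
        · exact h0
      have hv' : (1 : ℝ) ≤ p.2.val := by exact_mod_cast hv
      rw [intervalIntegral.integral_congr (g := fun _ => (0 : ℝ))]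
      · simp
      · intro x hx
        have hle : (p.2.val : ℝ) / n ≤ ((p.2.val : ℝ) + 1) / n := by
          have : (p.2.val : ℝ) ≤ (p.2.val : ℝ) + 1 := by linarith
          gcongr
        rw [Set.uIcc_of_le hle] at hx
        unfold horizonImg
        rw [if_neg]
        rw [not_lt]
        have h1 : 1 / (n : ℝ) ≤ (p.2.val : ℝ) / n := by gcongr
        exact h1.trans hx.1
  simp only [hin]
  rw [intervalIntegral.integral_const]
  by_cases h : p.2 = 0
  · simp only [h, if_true, smul_eq_mul]
    field_simp
    ring
  · simp [h]

lemma const_mem_horizon (α C a : ℝ) (hα : 1 ≤ α) (hC : 0 < C) :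
    (fun _ : ℝ => a) ∈ HorizonFns α C := by
  have key : ∀ β D : ℝ, 1 ≤ β → 0 < D → (fun _ : ℝ => a) ∈ HolderBall β D := by
    intro β D hβ hD t t'
    have : ⌊β⌋₊ ≠ 0 := by
      have := Nat.floor_pos.2 hβ
      omega
    simp only [iteratedDeriv_const, this, if_false, sub_self, abs_zero]
    positivity
  exact ⟨key α C hα hC, key 1 1 le_rfl one_pos⟩

lemma snlmWeight_meas (n δ : ℕ) [NeZero n] (σ t : ℝ) (x : Px n → ℝ) (p q : Px n) :
    Measurable (fun z : Px n → ℝ => snlmWeight n δ σ t x (fun q => x q + z q) p q) := by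
  unfold snlmWeight
  refine Measurable.ite (measurableSet_le ?_ measurable_const) measurable_const measurable_const
  unfold snlmDist2
  fun_prop

lemma snlmWeight_nonneg (n δ : ℕ) (σ t : ℝ) (x y : Px n → ℝ) (p q : Px n) :
    0 ≤ snlmWeight n δ σ t x y p q := by
  unfold snlmWeight; split_ifs <;> norm_num

lemma snlmWeight_le (n δ : ℕ) (σ t : ℝ) (x y : Px n → ℝ) (p q : Px n) :
    snlmWeight n δ σ t x y p q ≤ 1 := by
  unfold snlmWeight; split_ifs <;> norm_num

lemma snlmEst_meas (n δ : ℕ) [NeZero n] (σ t : ℝ) (x : Px n → ℝ) (p : Px n) :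
    Measurable (fun z : Px n → ℝ => snlmEst n δ σ t x (fun q => x q + z q) p) := by
  have := fun q => snlmWeight_meas n δ σ t x p q
  unfold snlmEst
  fun_prop

lemma snlmEst_bound (n δ : ℕ) [NeZero n] (σ t : ℝ) (x y : Px n → ℝ) (p : Px n) :
    |snlmEst n δ σ t x y p| ≤ ∑ q, |y q| := by
  unfold snlmEst
  rw [Finset.sum_div]
  refine (Finset.abs_sum_le_sum_abs _ _).trans (Finset.sum_le_sum fun q _ => ?_)
  have h0 := fun q => snlmWeight_nonneg n δ σ t x y p q
  have hW : snlmWeight n δ σ t x y p q ≤ ∑ q, snlmWeight n δ σ t x y p q :=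
    Finset.single_le_sum (fun q _ => h0 q) (Finset.mem_univ q)
  rw [mul_div_right_comm, abs_mul, abs_of_nonneg (div_nonneg (h0 q) ((h0 q).trans hW))]
  exact mul_le_of_le_one_left (abs_nonneg _) (div_le_one_of_le₀ hW ((h0 q).trans hW))

def domG (n : ℕ) [NeZero n] (z : Px n → ℝ) : ℝ :=
  (1 / (n : ℝ) ^ 2) * ∑ _p : Px n, (1 + ∑ q : Px n, (1 + |z q|)) ^ 2

lemma domG_integrable (n : ℕ) [NeZero n] (σ : ℝ) : Integrable (domG n) (noise n σ) := by
  unfold domG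
  have hq : ∀ q : Px n, MemLp (fun z : Px n → ℝ => 1 + |z q|) 2 (noise n σ) := fun q =>
    MemLp.add (f := fun _ => (1 : ℝ)) (memLp_const 1) (noise_integrable n σ q 2 (by simp)).abs
  have hs : MemLp (fun z : Px n → ℝ => ∑ q : Px n, (1 + |z q|)) 2 (noise n σ) :=
    memLp_finsetSum _ fun q _ => hq q
  have hm : MemLp (fun z : Px n → ℝ => 1 + ∑ q : Px n, (1 + |z q|)) 2 (noise n σ) :=
    MemLp.add (f := fun _ => (1 : ℝ)) (memLp_const 1) hs
  exact Integrable.const_mul (integrable_finsetSum _ fun p _ => hm.integrable_sq) _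

lemma integrand_le (n δ : ℕ) [NeZero n] (σ t : ℝ) (x : Px n → ℝ) (hx : ∀ p, |x p| ≤ 1)
    (z : Px n → ℝ) :
    (1 / (n : ℝ) ^ 2) * ∑ p : Px n,
      (x p - snlmEst n δ σ t x (fun q => x q + z q) p) ^ 2 ≤ domG n z := by
  unfold domG
  refine mul_le_mul_of_nonneg_left (Finset.sum_le_sum fun p _ => ?_) (by positivity)
  have h1 := snlmEst_bound n δ σ t x (fun q => x q + z q) p
  have h2 : ∑ q, |x q + z q| ≤ ∑ q : Px n, (1 + |z q|) :=
    Finset.sum_le_sum fun q _ => (abs_add_le _ _).trans (by linarith [hx q])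
  rw [← sq_abs]
  gcongr
  refine (abs_sub _ _).trans ?_
  linarith [hx p]

lemma integrand_integrable (n δ : ℕ) [NeZero n] (σ t : ℝ) (x : Px n → ℝ) (hx : ∀ p, |x p| ≤ 1) :
    Integrable (fun z : Px n → ℝ => (1 / (n : ℝ) ^ 2) * ∑ p : Px n,
      (x p - snlmEst n δ σ t x (fun q => x q + z q) p) ^ 2) (noise n σ) := by
  refine (domG_integrable n σ).mono' ?_ (Eventually.of_forall fun z => ?_)
  · have := fun p => snlmEst_meas n δ σ t x p
    exact Measurable.aestronglyMeasurable (by fun_prop)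
  · rw [Real.norm_eq_abs, abs_of_nonneg (by positivity)]
    exact integrand_le n δ σ t x hx z

lemma risk_bdd (n δ : ℕ) [NeZero n] (α C σ t : ℝ) :
    BddAbove (Set.range fun h : HorizonFns α C => snlmRisk n σ δ t (horizonPixels n h.1)) := by
  refine ⟨∫ z, domG n z ∂(noise n σ), ?_⟩
  rintro _ ⟨h, rfl⟩
  exact integral_mono (integrand_integrable n δ σ t _ (abs_horizonPixels_le n _))
    (domG_integrable n σ) (fun z => integrand_le n δ σ t _ (abs_horizonPixels_le n _) z)

lemma cast_inj_window {n δ : ℕ} (h : 2 * δ < n) {a b : ℤ} (ha : a ∈ Finset.Icc (-(δ : ℤ)) δ)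
    (hb : b ∈ Finset.Icc (-(δ : ℤ)) δ) (hab : (a : ZMod n) = (b : ZMod n)) : a = b := by
  rw [Finset.mem_Icc] at ha hb
  have hd := (ZMod.intCast_eq_intCast_iff_dvd_sub a b n).1 hab
  have : b - a = 0 := Int.eq_zero_of_abs_lt_dvd hd (by rw [abs_lt]; omega)
  omega

lemma shift_inj {n δ : ℕ} (h : 2 * δ < n) (q : Px n) :
    Set.InjOn (shift q) (offsets δ : Set (ℤ × ℤ)) := by
  intro o ho o' ho' heq
  simp only [offsets, Finset.coe_product, Set.mem_prod, Finset.mem_coe] at ho ho'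
  simp only [shift, Prod.mk.injEq, add_right_inj] at heq
  exact Prod.ext (cast_inj_window h ho.1 ho'.1 heq.1) (cast_inj_window h ho.2 ho'.2 heq.2)

lemma shift_zero {n : ℕ} (q : Px n) : shift q 0 = q := by
  simp [shift]

lemma zero_mem_offsets (δ : ℕ) : (0 : ℤ × ℤ) ∈ offsets δ := by
  simp [offsets]

lemma card_offsets_erase (δ : ℕ) : ((offsets δ).erase 0).card = (2 * δ + 1) ^ 2 - 1 := by
  rw [Finset.card_erase_of_mem (zero_mem_offsets δ), offsets, Finset.card_product]
  simp only [Int.card_Icc]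
  rw [show ((δ : ℤ) + 1 - -(δ : ℤ)).toNat = 2 * δ + 1 by omega, pow_two]

lemma snlmDist2_erase (n δ : ℕ) (x y : Px n → ℝ) (p q : Px n) :
    snlmDist2 n δ x y p q = (1 / (((2 * δ + 1) ^ 2 - 1 : ℕ) : ℝ)) *
      ∑ o ∈ (offsets δ).erase 0, (x (shift p o) - y (shift q o)) ^ 2 := by
  unfold snlmDist2
  congr 1
  rw [← Finset.add_sum_erase _ _ (zero_mem_offsets δ), shift_zero, shift_zero]
  simp only [sq_abs]
  ring

lemma snlmWeight_indep (n δ : ℕ) (h : 2 * δ < n) (σ t : ℝ) (x : Px n → ℝ) (p q : Px n)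
    (z z' : Px n → ℝ) (hz : ∀ s, s ≠ q → z s = z' s) :
    snlmWeight n δ σ t x (fun q => x q + z q) p q =
      snlmWeight n δ σ t x (fun q => x q + z' q) p q := by
  unfold snlmWeight
  have : snlmDist2 n δ x (fun q => x q + z q) p q = snlmDist2 n δ x (fun q => x q + z' q) p q := by
    rw [snlmDist2_erase, snlmDist2_erase]
    congr 1
    refine Finset.sum_congr rfl fun o ho => ?_
    rw [hz (shift q o)]
    intro heq
    have hm := Finset.mem_erase.1 ho
    exact hm.1 (shift_inj h q hm.2 (zero_mem_offsets δ) (by rw [heq, shift_zero]))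
  rw [this]

lemma weight_prob (n δ : ℕ) [NeZero n] (h : 2 * δ < n) (hδ : 1 ≤ δ) (σ t c : ℝ) (ht : 0 < t)
    (hc0 : 0 < c)
    (hc : ENNReal.ofReal c ≤
      (Measure.infinitePi (fun _ : ℕ => gaussianReal 0 (Real.toNNReal (σ ^ 2))))
      {ω | ∑ k ∈ Finset.range ((2 * δ + 1) ^ 2 - 1), (ω k) ^ 2
        ≤ (((2 * δ + 1) ^ 2 - 1 : ℕ) : ℝ) * σ ^ 2 - 2 * √(((2 * δ + 1) ^ 2 - 1 : ℕ) : ℝ)})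
    (x : Px n → ℝ) (hx : ∀ p, x p = if p.2 = 0 then 1 else 0) (p q : Px n) (hp : p.2 = 0)
    (hq : ∀ o ∈ offsets δ, (shift q o).2 ≠ 0) :
    c / 2 ≤ ∫ z, snlmWeight n δ σ t x (fun q => x q + z q) p q ∂(noise n σ) := by
  classical
  set m : ℕ := (2 * δ + 1) ^ 2 - 1 with hm
  have hmN : m = 4 * δ ^ 2 + 4 * δ := by
    rw [hm]; apply Nat.sub_eq_of_eq_add; ring
  have hmR : (m : ℝ) = 4 * (δ : ℝ) ^ 2 + 4 * δ := by rw [hmN]; push_cast; ring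
  have hδR : (1 : ℝ) ≤ δ := by exact_mod_cast hδ
  have hmpos : (0 : ℝ) < m := by rw [hmR]; positivity
  set O := (offsets δ).erase 0 with hO
  have hOsub : ∀ o ∈ O, o ∈ offsets δ := fun o ho => Finset.mem_of_mem_erase ho
  have hinj : Set.InjOn (shift q) (O : Set (ℤ × ℤ)) :=
    (shift_inj h q).mono (fun o ho => hOsub o ho)
  set T := O.image (shift q) with hT
  have hTcard : T.card = m := by
    rw [hT, Finset.card_image_of_injOn hinj, hO, card_offsets_erase]
  set R := O.filter (fun o => o.2 = 0) with hR
  have hRinj : Set.InjOn (shift q) (R : Set (ℤ × ℤ)) :=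
    hinj.mono (fun o ho => (Finset.mem_filter.1 ho).1)
  have hRcard : R.card ≤ 2 * δ + 1 := by
    have hsub : R ⊆ (Finset.Icc (-(δ : ℤ)) (δ : ℤ)) ×ˢ {0} := by
      intro o ho
      have h1 := Finset.mem_filter.1 ho
      have h2 := hOsub o h1.1
      simp only [offsets, Finset.mem_product] at h2
      simp only [Finset.mem_product, Finset.mem_singleton]
      exact ⟨h2.1, h1.2⟩
    refine (Finset.card_le_card hsub).trans ?_
    rw [Finset.card_product]
    simp only [Int.card_Icc, Finset.card_singleton]
    omega
  set E : Set (Px n → ℝ) := {z | ∑ s ∈ T, (z s) ^ 2 ≤ (m : ℝ) * σ ^ 2 - 2 * √(m : ℝ)} with hE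
  have hEm : MeasurableSet E := measurableSet_le (by fun_prop) (by fun_prop)
  have hEc : ENNReal.ofReal c ≤ noise n σ E := by
    rw [hE, noise_chi, hTcard]; exact hc
  have hsym := noise_sym n σ E hEm (by
    intro z hz
    simpa [hE] using hz) (R.image (shift q))
  set F := E ∩ {z | 0 ≤ ∑ s ∈ R.image (shift q), z s} with hF
  have hFm : MeasurableSet F := hEm.inter (measurableSet_le (by fun_prop) (by fun_prop))
  have hFc : c / 2 ≤ (noise n σ).real F := by
    have h1 := hEc.trans hsym
    have h2 := ENNReal.toReal_mono (by finiteness) h1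
    rw [ENNReal.toReal_ofReal hc0.le, ENNReal.toReal_mul] at h2
    simp only [ENNReal.toReal_ofNat] at h2
    rw [measureReal_def]
    linarith
  have hw : ∀ z ∈ F, snlmWeight n δ σ t x (fun q => x q + z q) p q = 1 := by
    rintro z ⟨hz1, hz2⟩
    simp only [hE, Set.mem_ofPred_eq] at hz1 hz2
    rw [hT, Finset.sum_image hinj] at hz1
    rw [Finset.sum_image hRinj] at hz2
    unfold snlmWeight
    rw [if_pos]
    rw [snlmDist2_erase]
    have hsum : ∑ o ∈ O, (x (shift p o) - (x (shift q o) + z (shift q o))) ^ 2 =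
        ∑ o ∈ O, (z (shift q o)) ^ 2 + ∑ o ∈ R, (1 - 2 * z (shift q o)) := by
      rw [hR, Finset.sum_filter, ← Finset.sum_add_distrib]
      refine Finset.sum_congr rfl fun o ho => ?_
      have ho' := hOsub o ho
      rw [hx (shift q o), if_neg (hq o ho'), hx (shift p o)]
      have hiff : (shift p o).2 = 0 ↔ o.2 = 0 := by
        simp only [shift, hp, zero_add]
        constructor
        · intro h0
          simp only [offsets, Finset.mem_product] at ho'
          exact cast_inj_window h ho'.2 (by simp) (by simpa using h0)
        · intro h0; simp [h0]
      by_cases h0 : o.2 = 0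
      · rw [if_pos (hiff.2 h0), if_pos h0]; ring
      · rw [if_neg (fun h => h0 (hiff.1 h)), if_neg h0]; ring
    rw [hsum, ← hm, Finset.sum_sub_distrib, ← Finset.mul_sum]
    simp only [Finset.sum_const, nsmul_eq_mul, mul_one]
    have hRc : (R.card : ℝ) ≤ 2 * δ + 1 := by exact_mod_cast hRcard
    have hsq : (2 * (δ : ℝ) + 1) ≤ 2 * √(m : ℝ) := by
      have : (2 * (δ : ℝ) + 1) / 2 ≤ √(m : ℝ) := by
        apply Real.le_sqrt_of_sq_le
        rw [hmR]; nlinarith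
      linarith
    rw [one_div, inv_mul_le_iff₀ hmpos]
    have : 0 < (m : ℝ) * t := by positivity
    nlinarith
  calc c / 2 ≤ (noise n σ).real F := hFc
    _ = ∫ z, F.indicator (fun _ => (1 : ℝ)) z ∂(noise n σ) := by
        rw [integral_indicator_const _ hFm]; simp
    _ ≤ _ := by
        refine integral_mono ((integrable_const 1).indicator hFm) ?_ ?_
        · refine (integrable_const (1 : ℝ)).mono'
            (snlmWeight_meas n δ σ t x p q).aestronglyMeasurable (Eventually.of_forall fun z => ?_)
          rw [Real.norm_eq_abs, abs_of_nonneg (snlmWeight_nonneg ..)]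
          exact snlmWeight_le ..
        · intro z
          by_cases hz : z ∈ F
          · simp only [Set.indicator_of_mem hz]; rw [hw z hz]
          · simp only [Set.indicator_of_notMem hz]; exact snlmWeight_nonneg ..

lemma good_card (n δ : ℕ) [NeZero n] (h : 2 * (2 * δ + 1) ≤ n) [DecidableEq (Px n)]
    [DecidablePred fun q : Px n => ∀ o ∈ offsets δ, (shift q o).2 ≠ 0] :
    (n : ℝ) ^ 2 / 2 ≤
      ((Finset.univ.filter fun q : Px n => ∀ o ∈ offsets δ, (shift q o).2 ≠ 0).card : ℝ) := by
  classical
  have h1 := Finset.card_filter_add_card_filter_not (s := (Finset.univ : Finset (Px n)))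
    (fun q : Px n => ∀ o ∈ offsets δ, (shift q o).2 ≠ 0)
  have h2 : (Finset.univ.filter fun q : Px n => ¬ ∀ o ∈ offsets δ, (shift q o).2 ≠ 0) ⊆
      (Finset.univ : Finset (ZMod n)) ×ˢ
        (Finset.Icc (-(δ : ℤ)) (δ : ℤ)).image (fun a : ℤ => - (a : ZMod n)) := by
    intro q hq
    simp only [Finset.mem_filter, Finset.mem_univ, true_and, not_forall, not_not] at hq
    obtain ⟨o, ho, h0⟩ := hq
    simp only [offsets, Finset.mem_product] at ho
    simp only [Finset.mem_product, Finset.mem_univ, true_and, Finset.mem_image]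
    exact ⟨o.2, ho.2, by
      simp only [shift] at h0
      exact (eq_neg_of_add_eq_zero_left h0).symm⟩
  have h3 := Finset.card_le_card h2
  rw [Finset.card_product, Finset.card_univ, ZMod.card] at h3
  have h4 : ((Finset.Icc (-(δ : ℤ)) (δ : ℤ)).image (fun a : ℤ => - (a : ZMod n))).card
      ≤ 2 * δ + 1 := by
    refine Finset.card_image_le.trans ?_
    rw [Int.card_Icc]; omega
  have h5 : (Finset.univ : Finset (Px n)).card = n * n := by
    rw [Finset.card_univ, Fintype.card_prod, ZMod.card]
  rw [h5] at h1
  have h6 := h3.trans (Nat.mul_le_mul_left n h4)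
  have h7 := Nat.mul_le_mul_left n h
  have h8 : n * n ≤ 2 * (Finset.univ.filter fun q : Px n =>
      ∀ o ∈ offsets δ, (shift q o).2 ≠ 0).card := by
    nlinarith
  have h9 : (n : ℝ) * n ≤ 2 * ((Finset.univ.filter fun q : Px n =>
      ∀ o ∈ offsets δ, (shift q o).2 ≠ 0).card : ℝ) := by exact_mod_cast h8
  nlinarith

lemma row_pointwise (n δ : ℕ) [NeZero n] (σ t a : ℝ) (ha : 0 ≤ a) (x y : Px n → ℝ)
    (p : Px n) (hp : x p = 1) :
    2 * a * (∑ q, snlmWeight n δ σ t x y p q * (1 - y q)) / (n : ℝ) ^ 2 - a ^ 2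
      ≤ (x p - snlmEst n δ σ t x y p) ^ 2 := by
  have hn : (0 : ℝ) < n := by exact_mod_cast Nat.pos_of_ne_zero (NeZero.ne n)
  set w := fun q => snlmWeight n δ σ t x y p q with hw
  have h0 : ∀ q, 0 ≤ w q := fun q => snlmWeight_nonneg n δ σ t x y p q
  set W := ∑ q, w q with hW
  have hW0 : 0 ≤ W := Finset.sum_nonneg fun q _ => h0 q
  have hWn : W ≤ (n : ℝ) ^ 2 := by
    calc W ≤ ∑ _q : Px n, (1 : ℝ) :=
          Finset.sum_le_sum fun q _ => snlmWeight_le n δ σ t x y p q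
      _ = (n : ℝ) ^ 2 := by simp [Fintype.card_prod, ZMod.card, pow_two]
  set u := 1 - snlmEst n δ σ t x y p with hu
  have hid : ∑ q, w q * (1 - y q) = W * u := by
    have he : snlmEst n δ σ t x y p = (∑ q, w q * y q) / W := rfl
    simp only [mul_sub, mul_one, Finset.sum_sub_distrib]
    by_cases hz : W = 0
    · have hall : ∀ q, w q = 0 := fun q =>
        (Finset.sum_eq_zero_iff_of_nonneg (fun q _ => h0 q)).1 hz q (Finset.mem_univ q)
      simp [hall, hz]
    · rw [hu, he]; field_simp; rfl
  have hle : (∑ q, w q * (1 - y q)) / (n : ℝ) ^ 2 ≤ |u| := by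
    rw [hid, div_le_iff₀ (by positivity)]
    calc W * u ≤ W * |u| := by gcongr; exact le_abs_self u
      _ ≤ (n : ℝ) ^ 2 * |u| := by gcongr
      _ = _ := mul_comm _ _
  rw [hp]
  have h3 : 2 * a * (∑ q, w q * (1 - y q)) / (n : ℝ) ^ 2 ≤ 2 * a * |u| := by
    rw [mul_div_assoc]; gcongr
  have h4 : u ^ 2 = |u| ^ 2 := (sq_abs u).symm
  have := sq_nonneg (|u| - a)
  change _ ≤ u ^ 2
  calc _ ≤ 2 * a * |u| - a ^ 2 := by linarith
    _ ≤ _ := by nlinarith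

lemma risk_lower_row (n δ : ℕ) [NeZero n] (h : 2 * (2 * δ + 1) ≤ n) (hδ : 1 ≤ δ) (σ t c : ℝ)
    (ht : 0 < t) (hc0 : 0 < c)
    (hc : ENNReal.ofReal c ≤
      (Measure.infinitePi (fun _ : ℕ => gaussianReal 0 (Real.toNNReal (σ ^ 2))))
      {ω | ∑ k ∈ Finset.range ((2 * δ + 1) ^ 2 - 1), (ω k) ^ 2
        ≤ (((2 * δ + 1) ^ 2 - 1 : ℕ) : ℝ) * σ ^ 2 - 2 * √(((2 * δ + 1) ^ 2 - 1 : ℕ) : ℝ)})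
    (x : Px n → ℝ) (hx : ∀ p, x p = if p.2 = 0 then 1 else 0) :
    (c / 4) ^ 2 / n ≤ snlmRisk n σ δ t x := by
  classical
  have hn : (0 : ℝ) < n := by exact_mod_cast Nat.pos_of_ne_zero (NeZero.ne n)
  have hx1 : ∀ p, |x p| ≤ 1 := by
    intro p; rw [hx]; split_ifs <;> simp
  have hx01 : ∀ p, 0 ≤ 1 - x p := by
    intro p; rw [hx]; split_ifs <;> simp
  set a := c / 4 with ha
  have ha0 : 0 < a := by positivity
  -- weights
  let w : Px n → Px n → (Px n → ℝ) → ℝ := fun p q z =>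
    snlmWeight n δ σ t x (fun q => x q + z q) p q
  have hwm : ∀ p q, Measurable (w p q) := fun p q => snlmWeight_meas n δ σ t x p q
  have hw0 : ∀ p q z, 0 ≤ w p q z := fun p q z => snlmWeight_nonneg ..
  have hw1 : ∀ p q z, w p q z ≤ 1 := fun p q z => snlmWeight_le ..
  have hwi : ∀ p q, Integrable (w p q) (noise n σ) := fun p q => by
    refine (integrable_const (1 : ℝ)).mono' (hwm p q).aestronglyMeasurable
      (Eventually.of_forall fun z => ?_)
    rw [Real.norm_eq_abs, abs_of_nonneg (hw0 p q z)]
    exact hw1 p q z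
  have hzi : ∀ q, Integrable (fun z : Px n → ℝ => z q) (noise n σ) := fun q =>
    (noise_integrable n σ q 1 (by simp)).integrable le_rfl
  have hwz : ∀ p q, Integrable (fun z => w p q z * z q) (noise n σ) := fun p q => by
    refine (hzi q).norm.mono' ((hwm p q).mul (measurable_pi_apply q)).aestronglyMeasurable
      (Eventually.of_forall fun z => ?_)
    rw [norm_mul, Real.norm_eq_abs (w p q z), abs_of_nonneg (hw0 p q z)]
    exact mul_le_of_le_one_left (norm_nonneg _) (hw1 p q z)
  have hterm : ∀ p q, Integrable (fun z => w p q z * (1 - (x q + z q))) (noise n σ) := fun p q => by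
    have := ((hwi p q).mul_const (1 - x q)).sub (hwz p q)
    refine this.congr (Eventually.of_forall fun z => ?_)
    simp only [Pi.sub_apply]; ring
  have hexp : ∀ p q, ∫ z, w p q z * (1 - (x q + z q)) ∂(noise n σ) =
      (∫ z, w p q z ∂(noise n σ)) * (1 - x q) := fun p q => by
    have h0 : ∫ z, w p q z * z q ∂(noise n σ) = 0 :=
      noise_zero n σ q (w p q) (hwm p q)
        (fun z z' hz => snlmWeight_indep n δ (by omega) σ t x p q z z' hz)
    have : ∀ z, w p q z * (1 - (x q + z q)) = w p q z * (1 - x q) - w p q z * z q := by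
      intro z; ring
    simp only [this]
    rw [integral_sub ((hwi p q).mul_const _) (hwz p q), h0, integral_mul_const, sub_zero]
  have hA : ∀ p : Px n, p.2 = 0 →
      a * (n : ℝ) ^ 2 ≤ ∫ z, ∑ q, w p q z * (1 - (x q + z q)) ∂(noise n σ) := by
    intro p hp
    rw [integral_finsetSum _ (fun q _ => hterm p q)]
    simp only [hexp]
    set G := (Finset.univ.filter fun q : Px n => ∀ o ∈ offsets δ, (shift q o).2 ≠ 0) with hG
    have hGc : (n : ℝ) ^ 2 / 2 ≤ (G.card : ℝ) := good_card n δ h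
    calc a * (n : ℝ) ^ 2 = (n : ℝ) ^ 2 / 2 * (c / 2) := by rw [ha]; ring
      _ ≤ G.card * (c / 2) := by gcongr
      _ = ∑ q ∈ G, (c / 2) := by simp
      _ ≤ ∑ q ∈ G, (∫ z, w p q z ∂(noise n σ)) * (1 - x q) := by
          refine Finset.sum_le_sum fun q hq => ?_
          have hq' := (Finset.mem_filter.1 hq).2
          have hxq : x q = 0 := by
            have := hq' 0 (zero_mem_offsets δ)
            rw [shift_zero] at this
            rw [hx, if_neg this]
          rw [hxq, sub_zero, mul_one]
          exact weight_prob n δ (by omega) hδ σ t c ht hc0 hc x hx p q hp hq'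
      _ ≤ _ := Finset.sum_le_sum_of_subset_of_nonneg (Finset.subset_univ _)
          (fun q _ _ => mul_nonneg (integral_nonneg (hw0 p q)) (hx01 q))
  set Z := (Finset.univ.filter fun p : Px n => p.2 = 0) with hZ
  have hZc : (Z.card : ℝ) = n := by
    have : Z = (Finset.univ : Finset (ZMod n)) ×ˢ {0} := by
      ext p; simp only [hZ, Finset.mem_filter, Finset.mem_univ, true_and, Finset.mem_product,
        Finset.mem_singleton]
    rw [this, Finset.card_product, Finset.card_univ, ZMod.card]; simp
  have hsumi : ∀ p, Integrable (fun z => ∑ q, w p q z * (1 - (x q + z q))) (noise n σ) :=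
    fun p => integrable_finsetSum _ fun q _ => hterm p q
  have hlowi : ∀ p, Integrable (fun z => 2 * a * (∑ q, w p q z * (1 - (x q + z q))) / (n : ℝ) ^ 2
      - a ^ 2) (noise n σ) := fun p =>
    (((hsumi p).const_mul (2 * a)).div_const _).sub (integrable_const _)
  have hlow : ∀ p ∈ Z, a ^ 2 ≤ ∫ z, (2 * a * (∑ q, w p q z * (1 - (x q + z q))) / (n : ℝ) ^ 2
      - a ^ 2) ∂(noise n σ) := by
    intro p hp
    have hp' : p.2 = 0 := (Finset.mem_filter.1 hp).2
    rw [integral_sub (((hsumi p).const_mul (2 * a)).div_const _) (integrable_const _),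
      integral_div, integral_const_mul]
    have := hA p hp'
    have h2 : 2 * a ^ 2 ≤ 2 * a * (∫ z, ∑ q, w p q z * (1 - (x q + z q)) ∂(noise n σ))
        / (n : ℝ) ^ 2 := by
      rw [le_div_iff₀ (by positivity)]
      nlinarith
    simp only [integral_const, probReal_univ, one_smul]
    linarith
  unfold snlmRisk
  calc a ^ 2 / n = (1 / (n : ℝ) ^ 2) * ∑ _p ∈ Z, a ^ 2 := by
        rw [Finset.sum_const, nsmul_eq_mul, hZc]; field_simp
    _ ≤ (1 / (n : ℝ) ^ 2) * ∑ p ∈ Z, ∫ z, (2 * a * (∑ q, w p q z * (1 - (x q + z q)))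
          / (n : ℝ) ^ 2 - a ^ 2) ∂(noise n σ) :=
        mul_le_mul_of_nonneg_left (Finset.sum_le_sum hlow) (by positivity)
    _ = ∫ z, (1 / (n : ℝ) ^ 2) * ∑ p ∈ Z, (2 * a * (∑ q, w p q z * (1 - (x q + z q)))
          / (n : ℝ) ^ 2 - a ^ 2) ∂(noise n σ) := by
        rw [integral_const_mul, integral_finsetSum _ (fun p _ => hlowi p)]
    _ ≤ _ := by
        refine integral_mono ((integrable_finsetSum _ fun p _ => hlowi p).const_mul _)
          (integrand_integrable n δ σ t x hx1) (fun z => ?_)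
        refine mul_le_mul_of_nonneg_left ?_ (by positivity)
        refine le_trans (Finset.sum_le_sum fun p hp => ?_)
          (Finset.sum_le_sum_of_subset_of_nonneg (Finset.subset_univ Z)
            (fun p _ _ => sq_nonneg _))
        exact row_pointwise n δ σ t a ha0.le x (fun q => x q + z q) p
          (by rw [hx, if_pos (Finset.mem_filter.1 hp).2])


/-- Theorem 5: lower bound for semi-oracle NLM under A1–A4:
there is `c > 0` such that for every admissible parameter choice `(δ_n, t_n)`,
`sup_{f ∈ H^α(C)} R_n(f, f̂^S) ≥ c/n` for all sufficiently large `n`. -/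
theorem snlm_risk_lower (α C σ : ℝ) (hα : 1 ≤ α) (hC : 0 < C) (hσ : 0 < σ) :
    ∃ c : ℝ, 0 < c ∧ ∀ (δ : ℕ → ℕ) (t : ℕ → ℝ),
      -- A1: the window size tends to infinity
      Tendsto δ atTop atTop →
      -- A2: the threshold is `σ² + t_n` with `t_n > 0`
      (∀ n, 0 < t n) →
      -- A3: eventually, neighborhoods whose noise-free distance is at least `1/2`
      -- never pass the full-oracle threshold `t_n`
      (∃ N₃ : ℕ, ∀ (n : ℕ) [NeZero n], N₃ ≤ n → ∀ (x : Px n → ℝ) (p q : Px n),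
        (1 : ℝ) / 2 ≤ nlmDist2 n (δ n) x p q → t n < nlmDist2 n (δ n) x p q) →
      -- A4: `δ_n = O(n^β)` for some `β ≤ 0.3`
      (∃ β c₄ : ℝ, β ≤ 0.3 ∧ ∀ n : ℕ, (δ n : ℝ) ≤ c₄ * (n : ℝ) ^ β) →
      ∃ N : ℕ, ∀ (n : ℕ) [NeZero n], N ≤ n →
        c / n ≤ ⨆ h : HorizonFns α C, snlmRisk n σ (δ n) (t n) (horizonPixels n h.1) := by

  obtain ⟨c, hc0, M, hM⟩ := chi_clt σ hσ
  refine ⟨(c / 4) ^ 2, by positivity, ?_⟩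
  intro δ t hA1 hA2 _ hA4
  obtain ⟨β, c₄, hβ, hδ⟩ := hA4
  have hsmall : ∀ᶠ n : ℕ in atTop, 2 * (2 * δ n + 1) ≤ n := by
    have h1 : Tendsto (fun n : ℕ => (n : ℝ) ^ (-(0.7 : ℝ))) atTop (nhds 0) :=
      (tendsto_rpow_neg_atTop (by norm_num)).comp tendsto_natCast_atTop_atTop
    have h2 := h1.const_mul |c₄|
    rw [mul_zero] at h2
    filter_upwards [h2.eventually (gt_mem_nhds (by norm_num : (0 : ℝ) < 1 / 8)),
      eventually_ge_atTop 4] with n hn hn4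
    have hn4' : (4 : ℝ) ≤ n := by exact_mod_cast hn4
    have hb : (n : ℝ) ^ β ≤ (n : ℝ) ^ (-(0.7 : ℝ)) * n := by
      calc (n : ℝ) ^ β ≤ (n : ℝ) ^ (-(0.7 : ℝ) + 1) :=
            Real.rpow_le_rpow_of_exponent_le (by linarith) (by linarith)
        _ = _ := by rw [Real.rpow_add_one (by positivity)]
    have h3 : (δ n : ℝ) ≤ 1 / 8 * n := by
      calc (δ n : ℝ) ≤ c₄ * (n : ℝ) ^ β := hδ n
        _ ≤ |c₄| * (n : ℝ) ^ β := by gcongr; exact le_abs_self _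
        _ ≤ |c₄| * ((n : ℝ) ^ (-(0.7 : ℝ)) * n) := by gcongr
        _ = (|c₄| * (n : ℝ) ^ (-(0.7 : ℝ))) * n := by ring
        _ ≤ 1 / 8 * n := by gcongr
    have h4 : 2 * (2 * (δ n : ℝ) + 1) ≤ n := by linarith
    exact_mod_cast h4
  have hbig : ∀ᶠ n : ℕ in atTop, M + 1 ≤ δ n := hA1.eventually_ge_atTop (M + 1)
  obtain ⟨N, hN⟩ := eventually_atTop.1 (hsmall.and hbig)
  refine ⟨N, fun n _ hn => ?_⟩
  obtain ⟨h1, h2⟩ := hN n hn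
  have hMm : M ≤ (2 * δ n + 1) ^ 2 - 1 := by
    apply Nat.le_sub_of_add_le
    nlinarith
  have hlow := risk_lower_row n (δ n) h1 (by omega) σ (t n) c (hA2 n) hc0 (hM _ hMm)
    (horizonPixels n (fun _ => 1 / (n : ℝ))) (fun p => horizonPixels_row n p)
  exact hlow.trans (le_ciSup (risk_bdd n (δ n) α C σ (t n))
    ⟨fun _ => 1 / (n : ℝ), const_mem_horizon α C _ hα hC⟩)
end
end

section
/- Consider the step image f(t₁,t₂) = 1_{{t₂ < 1/2}} with n even, and suppose δ_n = O(n^a) for some a < 1. Then for any threshold t_n > 0, with probability tending to 1 as n → ∞, at least c·n of the pixels in the row J = {(m, j*−1) : 1 ≤ m ≤ n} just below the edge receive SNLM weight w^S_{i*,j*}(m, j*−1) = 1, for some constant c > 0 independent of n; concretely, P( Σ_{m=1}^n w^S_{i*,j*}(m,j*−1) ≥ n p₀ − n^{(3+a)/4} ) → 1, where p₀ > 0 is a constant independent of n. -/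
open MeasureTheory ProbabilityTheory Real Finset Filter

noncomputable section

/-- The pixel array of the step image `f(t₁,t₂) = 1_{t₂ < 1/2}` (for `n` even this
is exactly the array of pixel averages): `x_{i,j} = 1` iff `j < n/2`. -/
def stepX (n : ℕ) : Px n → ℝ := fun p => if 2 * p.2.val < n then 1 else 0

/-- The row index `j* = ⌈n/2⌉` of the pixels just above the edge of the step image. -/
def jstar (n : ℕ) : ZMod n := ((n + 1) / 2 : ℕ)

lemma gauss_open_pos {v : NNReal} (hv : v ≠ 0) {U : Set ℝ} (hU : IsOpen U) (hne : U.Nonempty) :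
    0 < gaussianReal 0 v U := by
  have h : 0 < (volume : Measure ℝ) U := hU.measure_pos volume hne
  rw [pos_iff_ne_zero] at h ⊢
  exact fun h0 => h (gaussianReal_absolutelyContinuous' 0 hv h0)

lemma clt_step (σ : ℝ) (hσ : 0 < σ) (L : ℝ) :
    ∃ q : ENNReal, 0 < q ∧ ∃ N₀ : ℕ, ∀ (Ω ι : Type) [MeasurableSpace Ω] (P : Measure Ω)
      [IsProbabilityMeasure P] (X : ι → Ω → ℝ) (s : Finset ι), iIndepFun X P →
      (∀ i, HasLaw (X i) (gaussianReal 0 (Real.toNNReal (σ ^ 2))) P) → N₀ ≤ #s →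
      q ≤ P {ω | ∑ i ∈ s, X i ω ^ 2 ≤ #s * σ ^ 2 - L * √(#s)} := by
  set v := Real.toNNReal (σ ^ 2) with hvdef
  have hv : v ≠ 0 := by
    have : 0 < v := Real.toNNReal_pos.2 (by positivity)
    exact this.ne'
  have hvr : (v : ℝ) = σ ^ 2 := Real.coe_toNNReal _ (by positivity)
  obtain ⟨Ω', _, P', X', hm, hlaw, hind, hP⟩ := exists_iid ℕ (gaussianReal 0 v)
  have hX0 : MemLp (X' 0) 4 P' := by
    have := memLp_id_gaussianReal' (μ := 0) (v := v) 4 (by simp)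
    rw [← (hlaw 0).map_eq, memLp_map_measure_iff (by fun_prop) (by fun_prop)] at this
    exact this
  have hX2 : MemLp (fun ω => X' 0 ω ^ 2) 2 P' := by
    have h2 := hX0.norm_rpow_div 2
    have e : (4 : ENNReal) / 2 = 2 := by
      have h4 : (4 : ENNReal) = 2 * 2 := by norm_num
      rw [h4, ENNReal.mul_div_cancel_right (by simp) (by simp)]
    rw [e] at h2
    refine h2.congr_norm (by fun_prop) (ae_of_all _ fun ω => ?_)
    simp
  have hmean : ∫ ω, X' 0 ω ^ 2 ∂P' = σ ^ 2 := by
    have h1 := (hlaw 0).variance_eq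
    rw [variance_id_gaussianReal, variance_eq_sub, (hlaw 0).integral_eq] at h1
    · rw [← hvr, ← h1]
      have : ∫ x, x ∂gaussianReal 0 v = 0 := integral_id_gaussianReal
      simp [this]
    · exact hX0.mono_exponent (by norm_num)
  have hvar : Var[fun ω => X' 0 ω ^ 2; P'] ≠ 0 := by
    intro h0
    have := ae_eq_integral_of_variance_eq_zero hX2 h0
    rw [hmean] at this
    have h2 : P' (X' 0 ⁻¹' Set.Ioi σ) = 0 := by
      refine measure_mono_null ?_ this
      intro ω hω
      simp only [Set.mem_preimage, Set.mem_Ioi] at hω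
      simp only [Set.mem_compl_iff, Set.mem_ofPred_eq]
      intro h; nlinarith
    rw [← Measure.map_apply (hm 0) measurableSet_Ioi, (hlaw 0).map_eq] at h2
    exact (gauss_open_pos hv isOpen_Ioi ⟨σ + 1, by simp⟩).ne' h2
  set w := (Var[fun ω => X' 0 ω ^ 2; P']).toNNReal with hw
  have hw0 : w ≠ 0 := by
    have : 0 < w := Real.toNNReal_pos.2 (lt_of_le_of_ne (variance_nonneg _ _) hvar.symm)
    exact this.ne'
  have hclt := tendstoInDistribution_inv_sqrt_mul_sum_sub (X := fun k ω => X' k ω ^ 2) (P := P')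
    (P' := gaussianReal 0 w) (Y := id) HasLaw.id hX2
    (hind.comp (fun _ x => x ^ 2) (by fun_prop))
    (fun i => (IdentDistrib.comp (u := fun x => x ^ 2) ⟨(hm i).aemeasurable, (hm 0).aemeasurable, by
      rw [(hlaw i).map_eq, (hlaw 0).map_eq]⟩ (by fun_prop)))
  have hpos := gauss_open_pos hw0 (isOpen_Iio (a := -L)) ⟨-L - 1, by simp⟩
  have hlim := ProbabilityMeasure.le_liminf_measure_open_of_tendsto hclt.tendsto
    (isOpen_Iio (a := -L))
  simp only [ProbabilityMeasure.coe_mk, Measure.map_id] at hlim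
  refine ⟨gaussianReal 0 w (Set.Iio (-L)) / 2, ENNReal.half_pos hpos.ne', ?_⟩
  have hlt := lt_of_lt_of_le (ENNReal.half_lt_self hpos.ne' (measure_ne_top _ _)) hlim
  obtain ⟨N₀, hN₀⟩ := eventually_atTop.1 (eventually_lt_of_lt_liminf hlt)
  refine ⟨max N₀ 1, ?_⟩
  intro Ω ι _ P _ X s hXi hXl hs
  have hb := hN₀ #s (le_trans (le_max_left _ _) hs)
  have hs1 : 1 ≤ #s := le_trans (le_max_right _ _) hs
  refine hb.le.trans ?_
  rw [Measure.map_apply (by fun_prop) measurableSet_Iio]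
  have e := s.equivFin
  have hid : IdentDistrib (fun ω (k : Fin #s) => X' k ω) (fun ω (k : Fin #s) => X (e.symm k) ω) P' P := by
    refine IdentDistrib.pi (X := fun (k : Fin #s) ω => X' k ω)
      (Y := fun (k : Fin #s) ω => X (e.symm k) ω) (fun i => ?_) ?_ ?_
    · exact ⟨(hm i).aemeasurable, (hXl _).aemeasurable, by
        rw [(hlaw i).map_eq]; exact (hXl _).map_eq.symm⟩
    · exact hind.precomp Fin.val_injective
    · exact hXi.precomp (g := fun k : Fin #s => ((e.symm k : s) : ι))
        (Subtype.val_injective.comp e.symm.injective)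
  have hset : MeasurableSet {f : Fin #s → ℝ | ∑ k, f k ^ 2 ≤ #s * σ ^ 2 - L * √(#s)} :=
    measurableSet_le (by fun_prop) (by fun_prop)
  have hme := hid.measure_mem_eq hset
  have h3 : P {ω | ∑ i ∈ s, X i ω ^ 2 ≤ #s * σ ^ 2 - L * √(#s)} =
      P ((fun ω (k : Fin #s) => X (e.symm k) ω) ⁻¹'
        {f : Fin #s → ℝ | ∑ k, f k ^ 2 ≤ #s * σ ^ 2 - L * √(#s)}) := by
    congr 1
    ext ω
    simp only [Set.mem_ofPred_eq, Set.mem_preimage]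
    rw [← Finset.sum_coe_sort s, ← e.symm.sum_comp]
  rw [h3, ← hme]
  refine measure_mono ?_
  intro ω hω
  simp only [Set.mem_preimage, Set.mem_Iio, Set.mem_ofPred_eq, hmean] at hω ⊢
  rw [Finset.sum_range] at hω
  have hsq : 0 < √(#s : ℝ) := Real.sqrt_pos.2 (by exact_mod_cast hs1)
  rw [inv_mul_lt_iff₀ hsq] at hω
  linarith

lemma small_step (σ : ℝ) (hσ : 0 < σ) (M : ℕ) :
    ∃ q : ENNReal, 0 < q ∧ ∀ (Ω ι : Type) [MeasurableSpace Ω] [DecidableEq ι] (P : Measure Ω)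
      [IsProbabilityMeasure P] (X : ι → Ω → ℝ) (R C : Finset ι), iIndepFun X P →
      (∀ i, HasLaw (X i) (gaussianReal 0 (Real.toNNReal (σ ^ 2))) P) → Disjoint R C →
      #R + #C ≤ M →
      q ≤ P {ω | ∑ i ∈ R, (1 + X i ω) ^ 2 + ∑ i ∈ C, X i ω ^ 2 ≤ (#R + #C) * σ ^ 2} := by
  set v := Real.toNNReal (σ ^ 2) with hvdef
  have hv : v ≠ 0 := by
    have : 0 < v := Real.toNNReal_pos.2 (by positivity)
    exact this.ne'
  set r := min (gaussianReal 0 v (Set.Ioo (-1 - σ) (-1 + σ))) (gaussianReal 0 v (Set.Ioo (-σ) σ))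
    with hr
  have hr0 : 0 < r := lt_min (gauss_open_pos hv isOpen_Ioo ⟨-1, by simp [hσ]⟩)
    (gauss_open_pos hv isOpen_Ioo ⟨0, by simp [hσ]⟩)
  have hr1 : r ≤ 1 := (min_le_left _ _).trans prob_le_one
  refine ⟨r ^ M, ENNReal.pow_pos hr0 M, ?_⟩
  intro Ω ι _ _ P _ X R C hXi hXl hd hM
  set S : ι → Set ℝ := fun i => if i ∈ R then Set.Ioo (-1 - σ) (-1 + σ) else Set.Ioo (-σ) σ with hS
  have hSm : ∀ i, MeasurableSet (S i) := by
    intro i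
    simp only [hS]
    split_ifs <;> exact measurableSet_Ioo
  have h1 := hXi.measure_inter_preimage_eq_mul (R ∪ C) (sets := S) (fun i _ => hSm i)
  have h2 : r ^ #(R ∪ C) ≤ ∏ i ∈ R ∪ C, P (X i ⁻¹' S i) := by
    rw [← Finset.prod_const]
    refine Finset.prod_le_prod' fun i _ => ?_
    rw [← Measure.map_apply_of_aemeasurable (hXl i).aemeasurable (hSm i), (hXl i).map_eq]
    simp only [hS]
    split_ifs
    · exact min_le_left _ _
    · exact min_le_right _ _
  rw [← h1] at h2
  refine (pow_le_pow_of_le_one (zero_le) hr1 (m := #(R ∪ C))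
    ((Finset.card_union_le _ _).trans hM)).trans (h2.trans (measure_mono ?_))
  intro ω hω
  simp only [Set.mem_iInter, Set.mem_preimage, Finset.mem_union, hS] at hω
  simp only [Set.mem_ofPred_eq]
  have hR : ∑ i ∈ R, (1 + X i ω) ^ 2 ≤ #R * σ ^ 2 := by
    rw [← nsmul_eq_mul]
    refine Finset.sum_le_card_nsmul _ _ _ fun i hi => ?_
    have := hω i (Or.inl hi)
    rw [if_pos hi] at this
    exact sq_le_sq' (by linarith [this.1]) (by linarith [this.2])
  have hC : ∑ i ∈ C, (X i ω) ^ 2 ≤ #C * σ ^ 2 := by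
    rw [← nsmul_eq_mul]
    refine Finset.sum_le_card_nsmul _ _ _ fun i hi => ?_
    have := hω i (Or.inr hi)
    rw [if_neg (Finset.disjoint_right.1 hd hi)] at this
    exact sq_le_sq' (by linarith [this.1]) (by linarith [this.2])
  linarith

lemma row_step (σ : ℝ) (hσ : 0 < σ) (Ω ι : Type) [MeasurableSpace Ω] (P : Measure Ω)
      [IsProbabilityMeasure P] (X : ι → Ω → ℝ) (R : Finset ι)
      (hXl : ∀ i, HasLaw (X i) (gaussianReal 0 (Real.toNNReal (σ ^ 2))) P) (hR : 0 < #R) :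
      2⁻¹ ≤ P {ω | ∑ i ∈ R, (1 + X i ω) ^ 2 ≤ #R * (2 * (1 + σ ^ 2))} := by
  have hvr : ((Real.toNNReal (σ ^ 2) : NNReal) : ℝ) = σ ^ 2 := Real.coe_toNNReal _ (by positivity)
  have hm : ∀ i, AEMeasurable (X i) P := fun i => (hXl i).aemeasurable
  have hmem : ∀ i, MemLp (X i) 2 P := by
    intro i
    have := memLp_id_gaussianReal' (μ := 0) (v := Real.toNNReal (σ ^ 2)) 2 (by simp)
    rw [← (hXl i).map_eq, memLp_map_measure_iff (by fun_prop) (by fun_prop)] at this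
    exact this
  have hmean0 : ∀ i, ∫ ω, X i ω ∂P = 0 := by
    intro i
    rw [(hXl i).integral_eq]
    exact integral_id_gaussianReal
  have hmean2 : ∀ i, ∫ ω, X i ω ^ 2 ∂P = σ ^ 2 := by
    intro i
    have h1 := (hXl i).variance_eq
    rw [variance_id_gaussianReal, variance_eq_sub (hmem i), hmean0] at h1
    rw [← hvr, ← h1]
    simp
  have hi1 : ∀ i, Integrable (X i) P := fun i => (hmem i).integrable (by norm_num)
  have hi2 : ∀ i, Integrable (fun ω => X i ω ^ 2) P := fun i => (hmem i).integrable_sq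
  have he : ∀ i, (fun ω => (1 + X i ω) ^ 2) = fun ω => (1 + 2 * X i ω) + X i ω ^ 2 := by
    intro i; ext ω; ring
  have hi3 : ∀ i, Integrable (fun ω => (1 + X i ω) ^ 2) P := by
    intro i
    rw [he]
    exact ((integrable_const 1).add ((hi1 i).const_mul 2)).add (hi2 i)
  have hmean3 : ∀ i, ∫ ω, (1 + X i ω) ^ 2 ∂P = 1 + σ ^ 2 := by
    intro i
    have h12 : Integrable (fun ω => 1 + 2 * X i ω) P :=
      (integrable_const 1).add ((hi1 i).const_mul 2)
    rw [he, integral_add h12 (hi2 i),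
      integral_add (integrable_const 1) ((hi1 i).const_mul 2), integral_const_mul, hmean0, hmean2]
    simp
  have hmk := mul_meas_ge_le_integral_of_nonneg (μ := P)
    (f := fun ω => ∑ i ∈ R, (1 + X i ω) ^ 2)
    (ae_of_all _ fun ω => Finset.sum_nonneg fun i _ => sq_nonneg _)
    (integrable_finsetSum _ fun i _ => hi3 i) (#R * (2 * (1 + σ ^ 2)))
  rw [integral_finsetSum _ fun i _ => hi3 i] at hmk
  simp only [hmean3, Finset.sum_const, nsmul_eq_mul] at hmk
  have hRr : (0 : ℝ) < #R := by exact_mod_cast hR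
  have hK : 0 < (#R : ℝ) * (1 + σ ^ 2) := by positivity
  have hbad : P.real {ω | #R * (2 * (1 + σ ^ 2)) ≤ ∑ i ∈ R, (1 + X i ω) ^ 2} ≤ 1 / 2 := by
    by_contra hcon
    push Not at hcon
    nlinarith
  have hcov : 1 ≤ P.real {ω | #R * (2 * (1 + σ ^ 2)) ≤ ∑ i ∈ R, (1 + X i ω) ^ 2} +
      P.real {ω | ∑ i ∈ R, (1 + X i ω) ^ 2 ≤ #R * (2 * (1 + σ ^ 2))} := by
    refine le_trans ?_ (measureReal_union_le _ _)
    have : {ω | #R * (2 * (1 + σ ^ 2)) ≤ ∑ i ∈ R, (1 + X i ω) ^ 2} ∪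
      {ω | ∑ i ∈ R, (1 + X i ω) ^ 2 ≤ #R * (2 * (1 + σ ^ 2))} = Set.univ := by
      ext ω
      simp [le_total]
    rw [this]; simp
  have : (1 / 2 : ℝ) ≤ P.real {ω | ∑ i ∈ R, (1 + X i ω) ^ 2 ≤ #R * (2 * (1 + σ ^ 2))} := by linarith
  have h5 := (ENNReal.ofReal_le_iff_le_toReal (measure_ne_top P _)).2 this
  refine le_trans (le_of_eq ?_) h5
  rw [one_div, ENNReal.ofReal_inv_of_pos (by norm_num)]
  simp

lemma window_step (σ : ℝ) (hσ : 0 < σ) :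
    ∃ q : ENNReal, 0 < q ∧ q ≤ 1 ∧
      ∀ (Ω ι : Type) [MeasurableSpace Ω] [DecidableEq ι] (P : Measure Ω)
      [IsProbabilityMeasure P] (X : ι → Ω → ℝ) (R C : Finset ι) (δ : ℕ), iIndepFun X P →
      (∀ i, Measurable (X i)) →
      (∀ i, HasLaw (X i) (gaussianReal 0 (Real.toNNReal (σ ^ 2))) P) → Disjoint R C →
      1 ≤ δ → #R = 2 * δ → #C = (2 * δ + 1) * (2 * δ) →
      q ≤ P {ω | ∑ i ∈ R, (1 + X i ω) ^ 2 + ∑ i ∈ C, X i ω ^ 2 ≤ (#R + #C) * σ ^ 2} := by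
  obtain ⟨q₁, hq₁, N₀, h1⟩ := clt_step σ hσ (2 * (1 + σ ^ 2))
  obtain ⟨q₂, hq₂, h2⟩ := small_step σ hσ (N₀ + N₀)
  refine ⟨min (min (2⁻¹ * q₁) q₂) 1, lt_min (lt_min (ENNReal.mul_pos (by simp) hq₁.ne') hq₂)
    one_pos, min_le_right _ _, ?_⟩
  intro Ω ι _ _ P _ X R C δ hXi hXm hXl hd hδ hR hC
  refine (min_le_left _ _).trans ?_
  rcases le_total N₀ #C with h | h
  · refine (min_le_left _ _).trans ?_
    have hind := hXi.indepFun_finset R C hd hXm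
    have hsR : MeasurableSet {f : R → ℝ | ∑ i, (1 + f i) ^ 2 ≤ #R * (2 * (1 + σ ^ 2))} :=
      measurableSet_le (by fun_prop) (by fun_prop)
    have hsC : MeasurableSet {f : C → ℝ | ∑ i, f i ^ 2 ≤ #C * σ ^ 2 - (2 * (1 + σ ^ 2)) * √(#C)} :=
      measurableSet_le (by fun_prop) (by fun_prop)
    have hprod := hind.measure_inter_preimage_eq_mul _ _ hsR hsC
    have hr := row_step σ hσ Ω ι P X R hXl (by omega)
    have hc := h1 Ω ι P X C hXi hXl h
    have eR : ((fun a (i : R) => X i a) ⁻¹' {f : R → ℝ | ∑ i, (1 + f i) ^ 2 ≤ #R * (2 * (1 + σ ^ 2))})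
      = {ω | ∑ i ∈ R, (1 + X i ω) ^ 2 ≤ #R * (2 * (1 + σ ^ 2))} := by
      ext ω
      simp only [Set.mem_preimage, Set.mem_ofPred_eq]
      rw [← Finset.sum_coe_sort R]
    have eC : ((fun a (i : C) => X i a) ⁻¹' {f : C → ℝ | ∑ i, f i ^ 2 ≤ #C * σ ^ 2 - (2 * (1 + σ ^ 2)) * √(#C)})
      = {ω | ∑ i ∈ C, X i ω ^ 2 ≤ #C * σ ^ 2 - (2 * (1 + σ ^ 2)) * √(#C)} := by
      ext ω
      simp only [Set.mem_preimage, Set.mem_ofPred_eq]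
      rw [← Finset.sum_coe_sort C]
    rw [eR, eC] at hprod
    refine (mul_le_mul' hr hc).trans (hprod.symm.le.trans (measure_mono ?_))
    rintro ω ⟨hω1, hω2⟩
    simp only [Set.mem_ofPred_eq] at hω1 hω2 ⊢
    have hsq : (#R : ℝ) ≤ √(#C) := by
      apply Real.le_sqrt_of_sq_le
      rw [hR, hC]; push_cast; nlinarith [(Nat.cast_nonneg δ : (0 : ℝ) ≤ δ)]
    have hR0 : (0 : ℝ) ≤ #R := by positivity
    have : (#R : ℝ) * (2 * (1 + σ ^ 2)) ≤ 2 * (1 + σ ^ 2) * √(#C) := by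
      rw [mul_comm]
      exact mul_le_mul_of_nonneg_left hsq (by positivity)
    nlinarith [mul_nonneg hR0 (sq_nonneg σ)]
  · refine (min_le_right _ _).trans (h2 Ω ι P X R C hXi hXl hd ?_)
    have : #R ≤ #C := by rw [hR, hC]; nlinarith
    omega

lemma stepX_val (k : ℕ) (hk : 0 < k) (u : ZMod (2 * k)) (r : ℤ) (h0 : 0 ≤ r) (h1 : r < 2 * k) :
    stepX (2 * k) (u, (r : ZMod (2 * k))) = if r < k then 1 else 0 := by
  lift r to ℕ using h0
  have : NeZero (2 * k) := ⟨by omega⟩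
  have hv : ((r : ℤ) : ZMod (2 * k)).val = r := by
    rw [Int.cast_natCast, ZMod.val_natCast_of_lt (by omega)]
  simp only [stepX, hv]
  congr 1
  simp

/-- Row offsets without the centre. -/
def rowOff (δ : ℕ) : Finset (ℤ × ℤ) := (Finset.Icc (-(δ : ℤ)) (δ : ℤ)).erase 0 ×ˢ {0}

/-- Offsets off the central row. -/
def colOff (δ : ℕ) : Finset (ℤ × ℤ) :=
  Finset.Icc (-(δ : ℤ)) (δ : ℤ) ×ˢ (Finset.Icc (-(δ : ℤ)) (δ : ℤ)).erase 0

lemma card_rowOff (δ : ℕ) : #(rowOff δ) = 2 * δ := by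
  rw [rowOff, Finset.card_product, Finset.card_erase_of_mem (by simp), Int.card_Icc]
  simp; omega

lemma card_colOff (δ : ℕ) : #(colOff δ) = (2 * δ + 1) * (2 * δ) := by
  rw [colOff, Finset.card_product, Finset.card_erase_of_mem (by simp), Int.card_Icc]
  have : ((δ : ℤ) + 1 - -(δ : ℤ)).toNat = 2 * δ + 1 := by omega
  rw [this]; simp

lemma disj_off (δ : ℕ) : Disjoint (rowOff δ) (colOff δ) := by
  rw [Finset.disjoint_left]
  rintro ⟨a, b⟩ h h'
  simp [rowOff, colOff] at h h'
  omega

lemma zero_mem_off (δ : ℕ) : (0, 0) ∈ offsets δ := by simp [offsets]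

lemma off_eq (δ : ℕ) : (offsets δ).erase (0, 0) = rowOff δ ∪ colOff δ := by
  ext ⟨a, b⟩
  simp [rowOff, colOff, offsets]
  omega

lemma shift_injOn {n : ℕ} (δ : ℕ) (h : 2 * δ + 1 ≤ n) (p : Px n) :
    Set.InjOn (shift p) (offsets δ : Set (ℤ × ℤ)) := by
  have key : ∀ a b : ℤ, -(δ : ℤ) ≤ a → a ≤ δ → -(δ : ℤ) ≤ b → b ≤ δ →
      (a : ZMod n) = (b : ZMod n) → a = b := by
    intro a b h1 h2 h3 h4 h5
    rw [ZMod.intCast_eq_intCast_iff_dvd_sub] at h5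
    have := Int.eq_zero_of_abs_lt_dvd h5 (by rw [abs_lt]; constructor <;> omega)
    omega
  rintro ⟨a, b⟩ h1 ⟨a', b'⟩ h2 h3
  simp [offsets] at h1 h2
  simp only [shift, Prod.mk.injEq, add_right_inj] at h3
  rw [key a a' (by omega) (by omega) (by omega) (by omega) h3.1,
    key b b' (by omega) (by omega) (by omega) (by omega) h3.2]

lemma dist_eq (k δ : ℕ) (h : 2 * δ + 1 ≤ 2 * k) (z : Px (2 * k) → ℝ) (i m : ZMod (2 * k)) :
    (∑ o ∈ offsets δ, |stepX (2 * k) (shift (i, jstar (2 * k)) o) -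
      (stepX (2 * k) (shift (m, jstar (2 * k) - 1) o) + z (shift (m, jstar (2 * k) - 1) o))| ^ 2) -
      (stepX (2 * k) (i, jstar (2 * k)) -
        (stepX (2 * k) (m, jstar (2 * k) - 1) + z (m, jstar (2 * k) - 1))) ^ 2 =
    ∑ o ∈ rowOff δ, (1 + z (shift (m, jstar (2 * k) - 1) o)) ^ 2 +
    ∑ o ∈ colOff δ, z (shift (m, jstar (2 * k) - 1) o) ^ 2 := by
  have hj : jstar (2 * k) = ((k : ℤ) : ZMod (2 * k)) := by
    have : (2 * k + 1) / 2 = k := by omega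
    simp [jstar, this]
  have hs : ∀ o : ℤ × ℤ, o ∈ offsets δ →
      stepX (2 * k) (shift (i, jstar (2 * k)) o) = if o.2 < 0 then 1 else 0 := by
    intro o ho
    simp [offsets] at ho
    have : shift (i, jstar (2 * k)) o = (i + (o.1 : ZMod (2 * k)), (((k : ℤ) + o.2 : ℤ) : ZMod (2 * k))) := by
      rw [hj]; simp [shift]
    rw [this, stepX_val k (by omega) _ _ (by omega) (by omega)]
    congr 1
    apply propext; constructor <;> intro _ <;> omega
  have hs' : ∀ o : ℤ × ℤ, o ∈ offsets δ →
      stepX (2 * k) (shift (m, jstar (2 * k) - 1) o) = if o.2 ≤ 0 then 1 else 0 := by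
    intro o ho
    simp [offsets] at ho
    have : shift (m, jstar (2 * k) - 1) o = (m + (o.1 : ZMod (2 * k)), (((k : ℤ) - 1 + o.2 : ℤ) : ZMod (2 * k))) := by
      rw [hj]; simp [shift]
    rw [this, stepX_val k (by omega) _ _ (by omega) (by omega)]
    congr 1
    apply propext; constructor <;> intro _ <;> omega
  have hz : ∀ p : Px (2 * k), shift p (0, 0) = p := by intro p; simp [shift]
  rw [← Finset.sum_erase_add _ _ (zero_mem_off δ), hz, hz, sq_abs, add_sub_cancel_right,
    off_eq, Finset.sum_union (disj_off δ)]
  have hmem : ∀ o, o ∈ rowOff δ ∪ colOff δ → o ∈ offsets δ := by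
    intro o ho; rw [← off_eq] at ho; exact Finset.mem_of_mem_erase ho
  congr 1
  · refine Finset.sum_congr rfl fun o ho => ?_
    have ho' := hmem o (Finset.mem_union_left _ ho)
    rw [hs o ho', hs' o ho', sq_abs]
    have h2 : o.2 = 0 := by
      simp only [rowOff, Finset.mem_product, Finset.mem_singleton] at ho
      exact ho.2
    rw [if_neg (by omega), if_pos (by omega)]
    ring
  · refine Finset.sum_congr rfl fun o ho => ?_
    have ho' := hmem o (Finset.mem_union_right _ ho)
    rw [hs o ho', hs' o ho', sq_abs]
    simp [colOff] at ho
    rcases lt_or_gt_of_ne ho.2.1 with h | h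
    · simp [h, h.le]
    · simp [h.not_gt, h.not_ge]

lemma noise_indep (n : ℕ) [NeZero n] (σ : ℝ) :
    iIndepFun (fun (p : Px n) (z : Px n → ℝ) => z p) (noise n σ) :=
  iIndepFun_pi (X := fun _ => id) (fun _ => aemeasurable_id)

lemma noise_law (n : ℕ) [NeZero n] (σ : ℝ) (p : Px n) :
    HasLaw (fun z : Px n → ℝ => z p) (gaussianReal 0 (Real.toNNReal (σ ^ 2))) (noise n σ) :=
  (measurePreserving_eval (fun _ : Px n => gaussianReal 0 (Real.toNNReal (σ ^ 2))) p).hasLaw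

/-- The weight of column `m`, as a function of the noise. -/
def wt (n δ : ℕ) (σ t : ℝ) (i m : ZMod n) (z : Px n → ℝ) : ℝ :=
  snlmWeight n δ σ t (stepX n) (fun q => stepX n q + z q) (i, jstar n) (m, jstar n - 1)

lemma wt_meas (n δ : ℕ) (σ t : ℝ) (i m : ZMod n) : Measurable (wt n δ σ t i m) := by
  unfold wt snlmWeight
  refine Measurable.ite (measurableSet_le ?_ (by fun_prop)) (by fun_prop) (by fun_prop)
  unfold snlmDist2
  have (p : Px n) : Measurable fun z : Px n → ℝ => z p := measurable_pi_apply p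
  fun_prop

lemma wt_bound (n δ : ℕ) (σ t : ℝ) (i m : ZMod n) (z) : 0 ≤ wt n δ σ t i m z ∧ wt n δ σ t i m z ≤ 1 := by
  unfold wt snlmWeight
  split_ifs <;> norm_num

lemma wt_mem (n δ : ℕ) [NeZero n] (σ t : ℝ) (i m : ZMod n) : MemLp (wt n δ σ t i m) 2 (noise n σ) :=
  MemLp.of_bound (wt_meas n δ σ t i m).aestronglyMeasurable 1 (ae_of_all _ fun z => by
    rw [Real.norm_eq_abs, abs_of_nonneg (wt_bound ..).1]; exact (wt_bound ..).2)

lemma wt_mean (σ : ℝ) (hσ : 0 < σ) : ∃ q : ℝ, 0 < q ∧ q ≤ 1 ∧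
    ∀ (n : ℕ) [NeZero n] (δ : ℕ) (t : ℝ) (i m : ZMod n), 0 < t → Even n → 2 * δ + 1 ≤ n →
      q ≤ ∫ z, wt n δ σ t i m z ∂(noise n σ) := by
  obtain ⟨q, hq, hq1, hw⟩ := window_step σ hσ
  have hqt : q ≠ ⊤ := ne_top_of_le_ne_top (by simp) hq1
  refine ⟨q.toReal, ENNReal.toReal_pos hq.ne' hqt, by
    simpa using ENNReal.toReal_mono (by simp) hq1, ?_⟩
  intro n _ δ t i m ht hn hδ
  obtain ⟨k, rfl⟩ := hn.two_dvd
  suffices hE : ∃ E : Set (Px (2 * k) → ℝ), MeasurableSet E ∧ q ≤ noise (2 * k) σ E ∧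
      ∀ z ∈ E, wt (2 * k) δ σ t i m z = 1 by
    obtain ⟨E, hEm, hqE, hE1⟩ := hE
    calc q.toReal ≤ (noise (2 * k) σ).real E := ENNReal.toReal_mono (measure_ne_top _ _) hqE
      _ = ∫ z, E.indicator 1 z ∂(noise (2 * k) σ) := (integral_indicator_one hEm).symm
      _ ≤ _ := by
        refine integral_mono ((integrable_const (1 : ℝ)).indicator hEm)
          ((wt_mem ..).integrable (by norm_num)) fun z => ?_
        by_cases hz : z ∈ E
        · simp [hz, hE1 z hz]
        · simp [hz, (wt_bound ..).1]
  rcases Nat.eq_zero_or_pos δ with rfl | hδ1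
  · refine ⟨Set.univ, MeasurableSet.univ, by simpa using hq1, fun z _ => ?_⟩
    unfold wt snlmWeight snlmDist2
    rw [if_pos]
    simp
    positivity
  · set p : Px (2 * k) := (m, jstar (2 * k) - 1) with hp
    have hinj := shift_injOn δ hδ p
    have hsub : ∀ o, o ∈ rowOff δ ∪ colOff δ → o ∈ offsets δ := by
      intro o ho; rw [← off_eq] at ho; exact Finset.mem_of_mem_erase ho
    have hiR : Set.InjOn (shift p) (rowOff δ : Set (ℤ × ℤ)) :=
      hinj.mono fun o ho => hsub o (Finset.mem_union_left _ ho)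
    have hiC : Set.InjOn (shift p) (colOff δ : Set (ℤ × ℤ)) :=
      hinj.mono fun o ho => hsub o (Finset.mem_union_right _ ho)
    have hdis : Disjoint ((rowOff δ).image (shift p)) ((colOff δ).image (shift p)) := by
      rw [Finset.disjoint_left]
      intro x hx hx'
      obtain ⟨o, ho, rfl⟩ := Finset.mem_image.1 hx
      obtain ⟨o', ho', he⟩ := Finset.mem_image.1 hx'
      have := hinj (hsub o' (Finset.mem_union_right _ ho')) (hsub o (Finset.mem_union_left _ ho)) he
      exact Finset.disjoint_left.1 (disj_off δ) ho (this ▸ ho')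
    have hcR : #((rowOff δ).image (shift p)) = 2 * δ := by
      rw [Finset.card_image_of_injOn hiR, card_rowOff]
    have hcC : #((colOff δ).image (shift p)) = (2 * δ + 1) * (2 * δ) := by
      rw [Finset.card_image_of_injOn hiC, card_colOff]
    refine ⟨_, ?_, hw _ _ (noise (2 * k) σ) _ _ _ δ (noise_indep _ σ)
      (fun p => measurable_pi_apply p) (noise_law _ σ) hdis hδ1 hcR hcC, ?_⟩
    · exact measurableSet_le (by fun_prop) (by fun_prop)
    · intro z hz
      simp only [Set.mem_ofPred_eq] at hz
      rw [Finset.sum_image hiR, Finset.sum_image hiC, hcR, hcC] at hz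
      unfold wt snlmWeight snlmDist2
      rw [if_pos]
      rw [dist_eq k δ hδ z i m]
      have hρ : (((2 * δ + 1) ^ 2 - 1 : ℕ) : ℝ) = (2 * δ + 1) * (2 * δ) + 2 * δ := by
        have : (2 * δ + 1) ^ 2 - 1 = (2 * δ + 1) * (2 * δ) + 2 * δ := by
          rw [Nat.sub_eq_iff_eq_add (Nat.one_le_pow _ _ (by omega))]; ring
        rw [this]; push_cast; ring
      have hδr : (1 : ℝ) ≤ δ := by exact_mod_cast hδ1
      rw [hρ, one_div, inv_mul_le_iff₀ (by positivity)]
      push_cast at hz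
      have : 0 ≤ ((2 * (δ : ℝ) + 1) * (2 * δ) + 2 * δ) * t := by positivity
      rw [← hp]
      linarith

/-- The pixels in the columns within `δ` of `m`. -/
def strip (n δ : ℕ) [NeZero n] (m : ZMod n) : Finset (Px n) :=
  (Finset.Icc (-(δ : ℤ)) (δ : ℤ)).image (fun a : ℤ => m + (a : ZMod n)) ×ˢ Finset.univ

/-- Extend by zero. -/
def ext0 {n : ℕ} (S : Finset (Px n)) (f : S → ℝ) (p : Px n) : ℝ :=
  if h : p ∈ S then f ⟨p, h⟩ else 0

lemma ext0_meas {n : ℕ} (S : Finset (Px n)) : Measurable (ext0 S) := by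
  refine measurable_pi_lambda _ fun p => ?_
  unfold ext0
  split_ifs <;> fun_prop

lemma wt_local (n δ : ℕ) [NeZero n] (σ t : ℝ) (i m : ZMod n) (z : Px n → ℝ) :
    wt n δ σ t i m z = wt n δ σ t i m (ext0 (strip n δ m) (fun p => z p)) := by
  have h : ∀ o ∈ offsets δ, ext0 (strip n δ m) (fun p => z p) (shift (m, jstar n - 1) o)
      = z (shift (m, jstar n - 1) o) := by
    intro o ho
    unfold ext0
    rw [dif_pos]
    simp only [strip, shift, Finset.mem_product, Finset.mem_image, Finset.mem_univ, and_true]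
    simp only [offsets, Finset.mem_product] at ho
    exact ⟨o.1, ho.1, rfl⟩
  have h0 := h (0, 0) (zero_mem_off δ)
  have hz : ∀ p : Px n, shift p (0, 0) = p := by intro p; simp [shift]
  rw [hz] at h0
  unfold wt snlmWeight snlmDist2
  beta_reduce
  rw [h0]
  have : ∑ o ∈ offsets δ, |stepX n (shift (i, jstar n) o) -
      (stepX n (shift (m, jstar n - 1) o) + z (shift (m, jstar n - 1) o))| ^ 2 =
      ∑ o ∈ offsets δ, |stepX n (shift (i, jstar n) o) -
      (stepX n (shift (m, jstar n - 1) o) +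
        ext0 (strip n δ m) (fun p => z p) (shift (m, jstar n - 1) o))| ^ 2 :=
    Finset.sum_congr rfl fun o ho => by rw [h o ho]
  rw [this]

/-- Differences of columns that can interact. -/
def nearSet (n δ : ℕ) (m : ZMod n) : Finset (ZMod n) :=
  (Finset.Icc (-(2 * δ : ℤ)) (2 * δ : ℤ)).image (fun a : ℤ => m + (a : ZMod n))

lemma nearSet_card (n δ : ℕ) (m : ZMod n) : #(nearSet n δ m) ≤ 4 * δ + 1 := by
  refine Finset.card_image_le.trans ?_
  rw [Int.card_Icc]; omega

lemma wt_cov_zero (n δ : ℕ) [NeZero n] (σ t : ℝ) (i m m' : ZMod n) (h : m' ∉ nearSet n δ m) :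
    cov[wt n δ σ t i m, wt n δ σ t i m'; noise n σ] = 0 := by
  have hd : Disjoint (strip n δ m) (strip n δ m') := by
    rw [Finset.disjoint_left]
    rintro ⟨a, b⟩ h1 h2
    simp only [strip, Finset.mem_product, Finset.mem_image, Finset.mem_univ, and_true,
      Finset.mem_Icc] at h1 h2
    obtain ⟨u, hu, rfl⟩ := h1
    obtain ⟨v, hv, he⟩ := h2
    apply h
    simp only [nearSet, Finset.mem_image, Finset.mem_Icc]
    refine ⟨u - v, by omega, ?_⟩
    push_cast
    linear_combination -he
  have hi := (noise_indep n σ).indepFun_finset _ _ hd (fun p => measurable_pi_apply p)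
  have hi2 := hi.comp (φ := fun f => wt n δ σ t i m (ext0 _ f))
    (ψ := fun f => wt n δ σ t i m' (ext0 _ f))
    ((wt_meas ..).comp (ext0_meas _)) ((wt_meas ..).comp (ext0_meas _))
  have e1 : (fun f => wt n δ σ t i m (ext0 (strip n δ m) f)) ∘ (fun (z : Px n → ℝ) (p : strip n δ m) => z p)
      = wt n δ σ t i m := by
    ext z; exact (wt_local n δ σ t i m z).symm
  have e2 : (fun f => wt n δ σ t i m' (ext0 (strip n δ m') f)) ∘ (fun (z : Px n → ℝ) (p : strip n δ m') => z p)
      = wt n δ σ t i m' := by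
    ext z; exact (wt_local n δ σ t i m' z).symm
  rw [e1, e2] at hi2
  exact hi2.covariance_eq_zero (wt_mem ..) (wt_mem ..)

lemma wt_cov_le (n δ : ℕ) [NeZero n] (σ t : ℝ) (i m m' : ZMod n) :
    cov[wt n δ σ t i m, wt n δ σ t i m'; noise n σ] ≤ 1 := by
  rw [covariance_eq_sub (wt_mem ..) (wt_mem ..)]
  have h1 : ∀ m, 0 ≤ ∫ z, wt n δ σ t i m z ∂(noise n σ) := fun m =>
    integral_nonneg fun z => (wt_bound ..).1
  have h2 : ∫ z, (wt n δ σ t i m * wt n δ σ t i m') z ∂(noise n σ) ≤ ∫ z, (1 : ℝ) ∂(noise n σ) := by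
    refine integral_mono ((wt_mem ..).integrable_mul (wt_mem ..)) (integrable_const _) fun z => ?_
    exact mul_le_one₀ (wt_bound ..).2 (wt_bound ..).1 (wt_bound ..).2
  simp at h2
  have := mul_nonneg (h1 m) (h1 m')
  simp only [Pi.mul_apply] 
  linarith

lemma wt_var (n δ : ℕ) [NeZero n] (σ t : ℝ) (i : ZMod n) :
    Var[fun z => ∑ m : ZMod n, wt n δ σ t i m z; noise n σ] ≤ n * (4 * δ + 1) := by
  rw [variance_fun_sum (fun m => wt_mem n δ σ t i m)]
  have : ∀ m : ZMod n, ∑ m', cov[wt n δ σ t i m, wt n δ σ t i m'; noise n σ] ≤ 4 * δ + 1 := by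
    intro m
    rw [← Finset.sum_subset (Finset.subset_univ (nearSet n δ m))
      (fun m' _ h => wt_cov_zero n δ σ t i m m' h)]
    refine (Finset.sum_le_card_nsmul _ _ 1 fun m' _ => wt_cov_le n δ σ t i m m').trans ?_
    rw [nsmul_eq_mul, mul_one]
    exact_mod_cast nearSet_card n δ m
  refine (Finset.sum_le_card_nsmul _ _ _ fun m _ => this m).trans ?_
  rw [nsmul_eq_mul, Finset.card_univ, ZMod.card]

lemma main_bound (n δ : ℕ) [NeZero n] (σ t q ε : ℝ) (hq : 0 < q) (i : ZMod n)
    (hmean : ∀ m, q ≤ ∫ z, wt n δ σ t i m z ∂(noise n σ))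
    (hε : 4 * (4 * δ + 1) / (n * q ^ 2) ≤ ε) :
    1 - ε ≤ (noise n σ).real {z | n * (q / 2) ≤ ∑ m : ZMod n, wt n δ σ t i m z} := by
  have hn : (0 : ℝ) < n := by exact_mod_cast NeZero.pos n
  set W : (Px n → ℝ) → ℝ := fun z => ∑ m : ZMod n, wt n δ σ t i m z with hW
  have hWm : Measurable W := Finset.measurable_sum _ fun m _ => wt_meas n δ σ t i m
  have hWL : MemLp W 2 (noise n σ) := memLp_finsetSum _ fun m _ => wt_mem n δ σ t i m
  have hWE : n * q ≤ ∫ z, W z ∂(noise n σ) := by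
    rw [hW, integral_finsetSum _ fun m _ => (wt_mem n δ σ t i m).integrable (by norm_num)]
    refine le_trans (le_of_eq ?_) (Finset.card_nsmul_le_sum Finset.univ _ q fun m _ => hmean m)
    rw [nsmul_eq_mul, Finset.card_univ, ZMod.card]
  have hc : 0 < n * (q / 2) := by positivity
  have hch := meas_ge_le_variance_div_sq hWL hc
  have hms : MeasurableSet {z | n * (q / 2) ≤ W z} := measurableSet_le (by fun_prop) hWm
  have h1 : (noise n σ).real {z | n * (q / 2) ≤ W z}ᶜ ≤ ε := by
    refine ENNReal.toReal_le_of_le_ofReal (le_trans (by positivity) hε) ?_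
    refine (measure_mono ?_).trans (hch.trans (ENNReal.ofReal_le_ofReal (le_trans ?_ hε)))
    · intro z hz
      simp only [Set.mem_compl_iff, Set.mem_ofPred_eq, not_le] at hz ⊢
      rw [abs_sub_comm]
      refine le_trans ?_ (le_abs_self _)
      linarith
    · rw [div_le_div_iff₀ (by positivity) (by positivity)]
      have := wt_var n δ σ t i
      have h3 : 0 ≤ n * q ^ 2 := by positivity
      nlinarith [mul_le_mul_of_nonneg_right this h3]
  rw [probReal_compl_eq_one_sub hms] at h1
  linarith

lemma ratio_tendsto (a : ℝ) (ha : a < 1) (δ : ℕ → ℕ)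
    (h : ∃ c : ℝ, ∀ n : ℕ, (δ n : ℝ) ≤ c * (n : ℝ) ^ a) (η : ℝ) (hη : 0 < η) :
    ∃ N : ℕ, ∀ n, N ≤ n → (4 * δ n + 1 : ℝ) ≤ η * n := by
  obtain ⟨c, hc⟩ := h
  have h1 : Tendsto (fun n : ℕ => 4 * c * (n : ℝ) ^ (-(1 - a)) + 1 / (n : ℝ)) atTop (nhds 0) := by
    have := ((tendsto_rpow_neg_atTop (sub_pos.2 ha)).comp tendsto_natCast_atTop_atTop).const_mul (4 * c)
    simpa using this.add tendsto_one_div_atTop_nhds_zero_nat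
  obtain ⟨N, hN⟩ := eventually_atTop.1 (h1.eventually (gt_mem_nhds hη))
  refine ⟨max N 1, fun n hn => ?_⟩
  have hn0 : (0 : ℝ) < n := by
    have : 1 ≤ n := (le_max_right _ _).trans hn
    exact_mod_cast this
  have h2 := hN n ((le_max_left _ _).trans hn)
  have h3 : (n : ℝ) ^ a = (n : ℝ) ^ (-(1 - a)) * n := by
    nth_rewrite 3 [← Real.rpow_one (n : ℝ)]
    rw [← Real.rpow_add hn0]; congr 1; ring
  have h4 := hc n
  rw [h3] at h4
  have h5 := mul_le_mul_of_nonneg_right h2.le hn0.le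
  have h6 : (4 * c * (n : ℝ) ^ (-(1 - a)) + 1 / (n : ℝ)) * n =
      4 * (c * ((n : ℝ) ^ (-(1 - a)) * n)) + 1 := by
    field_simp
  linarith

/-- Corollary 1: for the step image `1_{t₂<1/2}` with `n` even and
`δ_n = O(n^a)`, `a < 1`, for any thresholds `t_n > 0`, with probability tending to `1`
(as `n → ∞` along even `n`) at least `Θ(n)` of the pixels just below the edge receive
SNLM weight `1`: `P(Σ_m w^S_{i*,j*}(m, j*-1) ≥ n p₀ - n^{(3+a)/4}) → 1`, where
`p₀ > 0` is a constant independent of `n`. -/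
theorem snlm_below_edge_weights_corollary (σ : ℝ) (hσ : 0 < σ) :
    ∃ p₀ : ℝ, 0 < p₀ ∧ ∀ (a : ℝ), a < 1 → ∀ δ : ℕ → ℕ,
      (∃ c : ℝ, ∀ n : ℕ, (δ n : ℝ) ≤ c * (n : ℝ) ^ a) →
      ∀ t : ℕ → ℝ, (∀ n, 0 < t n) →
      ∀ ε : ℝ, 0 < ε → ∃ N : ℕ, ∀ (n : ℕ) [NeZero n], N ≤ n → Even n →
        ∀ i : ZMod n,
          1 - ε ≤ ((noise n σ)
            {z | n * p₀ - (n : ℝ) ^ ((3 + a) / 4) ≤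
              ∑ m : ZMod n,
                snlmWeight n (δ n) σ (t n) (stepX n) (fun q => stepX n q + z q)
                  (i, jstar n) (m, jstar n - 1)}).toReal := by
  obtain ⟨q, hq, hq1, hmean⟩ := wt_mean σ hσ
  refine ⟨q / 2, by positivity, ?_⟩
  intro a ha δ hδ t ht ε hε
  obtain ⟨N, hN⟩ := ratio_tendsto a ha δ hδ (min 1 (ε * q ^ 2 / 4)) (by positivity)
  refine ⟨N, ?_⟩
  intro n _ hn hev i
  have h1 := hN n hn
  have hn0 : (0 : ℝ) < n := by exact_mod_cast NeZero.pos n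
  have h2 : (4 * δ n + 1 : ℝ) ≤ n := by
    refine h1.trans ?_
    have := mul_le_mul_of_nonneg_right (min_le_left 1 (ε * q ^ 2 / 4)) hn0.le
    linarith
  have h3 : 2 * δ n + 1 ≤ n := by
    have : 4 * δ n + 1 ≤ n := by exact_mod_cast h2
    omega
  have h4 : (4 * δ n + 1 : ℝ) ≤ ε * q ^ 2 / 4 * n :=
    h1.trans (mul_le_mul_of_nonneg_right (min_le_right _ _) hn0.le)
  have hb := main_bound n (δ n) σ (t n) q ε hq i
    (fun m => hmean n (δ n) (t n) i m (ht n) hev h3) (by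
      rw [div_le_iff₀ (by positivity)]; nlinarith)
  refine hb.trans (measureReal_mono ?_)
  intro z hz
  have hp : 0 ≤ (n : ℝ) ^ ((3 + a) / 4) := by positivity
  simp only [Set.mem_ofPred_eq] at hz ⊢
  exact le_trans (by linarith) hz
end
end
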